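/- For every p < 1/2 and every r ∈ [0,1], the DaC measure ℙ_{p,r} is ergodic with respect to translations: it is invariant under the translations T_{(1,0)} and T_{(0,1)}, and each of these two translations is an ergodic measure-preserving transformation of (the configuration space equipped with) ℙ_{p,r}, i.e. every measurable event invariant under T_{(1,0)} (respectively T_{(0,1)}) has ℙ_{p,r}-probability 0 or 1. -/

import Mathlib

/-!
Common definitions for the Divide-and-Colour (DaC) model of
Bálint, Camia and Meester, "Sharp phase transition and critical
behaviour in 2D divide and colour models".

The model is built concretely: a single uniform random variable on `(0,1]`
is decomposed into countably many i.i.d. uniform random variables (via its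
binary digits); one family of uniforms drives the Bernoulli(p) bond
percolation (the edge configuration), and an independent family of uniforms
attaches an independent Bernoulli(r) colour to each bond cluster (the colour
of a cluster is determined by the uniform label of its canonical
representative, the vertex of minimal encoding).  The DaC measure
`ℙ_{p,r}` is the pushforward of Lebesgue measure on `(0,1]` under the map
producing the pair (edge configuration, colour configuration).
-/

open MeasureTheory ENNReal

namespace DaC

/-- Vertices of the lattice. -/
abbrev V : Type := ℤ × ℤ

/-- Square lattice adjacency: Euclidean distance `1`. -/
def SqAdj (u v : V) : Prop := (u.1 - v.1) ^ 2 + (u.2 - v.2) ^ 2 = 1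

/-- `*`-adjacency (matching graph of the square lattice):
Euclidean distance `1` or `√2`. -/
def StarAdj (u v : V) : Prop :=
  (u.1 - v.1) ^ 2 + (u.2 - v.2) ^ 2 = 1 ∨ (u.1 - v.1) ^ 2 + (u.2 - v.2) ^ 2 = 2

/-- Triangular lattice adjacency. -/
def TriAdj (u v : V) : Prop :=
  (u.1 - v.1, u.2 - v.2) ∈
    ({(1, 0), (-1, 0), (0, 1), (0, -1), (1, 1), (-1, -1)} : Set (ℤ × ℤ))

/-- Classical indicator of a proposition, as a boolean. -/
noncomputable def boolOf (P : Prop) : Bool := @decide P (Classical.propDecidable P)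

/-- The `n`-th binary digit of a real number `x ∈ (0,1]`. -/
noncomputable def bit (n : ℕ) (x : ℝ) : Bool := boolOf (⌊x * 2 ^ (n + 1)⌋ % 2 = 1)

/-- A countable family of i.i.d. uniform random variables on `[0,1]`, extracted
from a single uniform sample `x` by splitting its binary digits. -/
noncomputable def unif (i : ℕ) (x : ℝ) : ℝ :=
  ∑' k : ℕ, if bit (Nat.pair i k) x then ((2 : ℝ)⁻¹) ^ (k + 1) else 0

/-- A symmetric encoding of (unordered) pairs of vertices. -/
noncomputable def eIdx (u v : V) : ℕ :=
  min (Encodable.encode (u, v)) (Encodable.encode (v, u))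

/-- The uniform label attached to the edge `{u,v}`. -/
noncomputable def edgeU (u v : V) (x : ℝ) : ℝ := unif (2 * eIdx u v) x

/-- The uniform label attached to the vertex `v` (independent of the edge labels). -/
noncomputable def vtxU (v : V) (x : ℝ) : ℝ := unif (2 * Encodable.encode v + 1) x

/-- Edge configurations: a boolean (open/closed) for each (ordered) pair of
vertices; configurations arising from the model are symmetric and are
supported on pairs of adjacent vertices. -/
abbrev EdgeCfg : Type := V → V → Bool

/-- Colour configurations: a colour (black = `true`, white = `false`) for each vertex. -/
abbrev ColourCfg : Type := V → Bool

/-- Full configurations of the DaC model: an edge configuration together with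
a colour configuration. -/
abbrev Config : Type := EdgeCfg × ColourCfg

/-- The Bernoulli(p) edge configuration determined by the uniform sample `x`,
on the lattice with adjacency `adj`: an edge `{u,v}` of the lattice is open
iff its uniform label is `< p`. -/
noncomputable def edgeCfg (adj : V → V → Prop) (p : ℝ) (x : ℝ) : EdgeCfg :=
  fun u v => boolOf (adj u v) && boolOf (edgeU u v x < p)

/-- Connectivity through open edges of the edge configuration `η`. -/
def Conn (η : EdgeCfg) (u v : V) : Prop :=
  Relation.ReflTransGen (fun a b => η a b = true) u v

/-- The `p`-cluster of the vertex `v`: its connected component in the graph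
retaining only open edges. -/
def pCluster (η : EdgeCfg) (v : V) : Set V := {w | Conn η v w}

/-- Canonical representative of the `p`-cluster of `v`: the vertex of the
cluster with minimal encoding. -/
noncomputable def clusterRep (η : EdgeCfg) (v : V) : V :=
  (Encodable.decode (α := V) (sInf (Encodable.encode '' pCluster η v))).getD v

/-- The colour configuration with parameters `p, r` determined by the uniform
sample `x`: every `p`-cluster is coloured black (with probability `r`)
or white, independently of all other `p`-clusters, according to the uniform
label of its canonical representative. -/
noncomputable def colourCfg (adj : V → V → Prop) (p r : ℝ) (x : ℝ) : ColourCfg :=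
  fun v => boolOf (vtxU (clusterRep (edgeCfg adj p x) v) x < r)

/-- The uniform sample: Lebesgue measure on `(0,1]`. -/
noncomputable def base : Measure ℝ := volume.restrict (Set.Ioc 0 1)

/-- `ν_p`: the product Bernoulli(p) measure on edge configurations of the
lattice with adjacency `adj`. -/
noncomputable def edgeMeasure (adj : V → V → Prop) (p : ℝ) : Measure EdgeCfg :=
  base.map (edgeCfg adj p)

/-- `ℙ_{p,r}`: the DaC measure on pairs (edge configuration, colour
configuration) for the lattice with adjacency `adj`. -/
noncomputable def DaCMeasure (adj : V → V → Prop) (p r : ℝ) : Measure Config :=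
  base.map (fun x => (edgeCfg adj p x, colourCfg adj p r x))

/-- Monochromatic connectivity: `u` and `v` are joined by a path (for the
adjacency `adj`) all of whose vertices have colour `c`. -/
def MonoConn (adj : V → V → Prop) (ξ : ColourCfg) (c : Bool) (u v : V) : Prop :=
  Relation.ReflTransGen (fun a b => adj a b ∧ ξ a = c ∧ ξ b = c) u v

/-- The colour-`c` cluster of `v` (for the adjacency `adj`): empty if `v` does
not have colour `c`, and otherwise the maximal `adj`-connected set of
`c`-coloured vertices containing `v`. -/
def monoCluster (adj : V → V → Prop) (ξ : ColourCfg) (c : Bool) (v : V) : Set V :=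
  {w | ξ v = c ∧ MonoConn adj ξ c v w}

/-- The origin. -/
def origin : V := (0, 0)

/-- The size (cardinality) of a set of vertices, with values in `ℝ≥0∞`. -/
noncomputable def sizeE (S : Set V) : ℝ≥0∞ := S.encard

/-- The probability, under the DaC measure with edge adjacency `eadj` and
parameters `p, r`, that the origin lies in an infinite colour-`c` cluster for
the adjacency `cadj`. -/
noncomputable def percProb (eadj cadj : V → V → Prop) (c : Bool) (p r : ℝ) : ℝ≥0∞ :=
  DaCMeasure eadj p r {ω | (monoCluster cadj ω.2 c origin).Infinite}

/-- `Θ(p,r)` for the square lattice: probability that the origin lies in an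
infinite black `r`-cluster. -/
noncomputable def thetaSq (p r : ℝ) : ℝ≥0∞ := percProb SqAdj SqAdj true p r

/-- `Θ*(p,s)` for the square lattice: the `ℙ_{p,1-s}`-probability that the
origin lies in an infinite white `*`-cluster. -/
noncomputable def thetaStarSq (p s : ℝ) : ℝ≥0∞ := percProb SqAdj StarAdj false p (1 - s)

/-- `Θ(p,r)` for the triangular lattice. -/
noncomputable def thetaTri (p r : ℝ) : ℝ≥0∞ := percProb TriAdj TriAdj true p r

/-- The critical colouring density `r_c(p)` of the square lattice DaC model. -/
noncomputable def rcSq (p : ℝ) : ℝ :=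
  sSup {r : ℝ | r ∈ Set.Icc (0 : ℝ) 1 ∧ thetaSq p r = 0}

/-- The critical colouring density `r_c*(p)` for white `*`-percolation. -/
noncomputable def rcStarSq (p : ℝ) : ℝ :=
  sSup {s : ℝ | s ∈ Set.Icc (0 : ℝ) 1 ∧ thetaStarSq p s = 0}

/-- The critical colouring density `r_c(p)` of the triangular lattice DaC model. -/
noncomputable def rcTri (p : ℝ) : ℝ :=
  sSup {r : ℝ | r ∈ Set.Icc (0 : ℝ) 1 ∧ thetaTri p r = 0}

/-! ### Rectangles and crossings -/

/-- The rectangle `S_{n,m} = ([0,n] × [0,m]) ∩ ℤ²`. -/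
def Rect (n m : ℕ) : Set V :=
  {v | 0 ≤ v.1 ∧ v.1 ≤ (n : ℤ) ∧ 0 ≤ v.2 ∧ v.2 ≤ (m : ℤ)}

/-- The top side of `S_{n,m}`. -/
def TopSide (n m : ℕ) : Set V := {v | v ∈ Rect n m ∧ v.2 = (m : ℤ)}

/-- The bottom side of `S_{n,m}`. -/
def BotSide (n m : ℕ) : Set V := {v | v ∈ Rect n m ∧ v.2 = 0}

/-- The left side of `S_{n,m}`. -/
def LeftSide (n m : ℕ) : Set V := {v | v ∈ Rect n m ∧ v.1 = 0}

/-- The right side of `S_{n,m}`. -/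
def RightSide (n m : ℕ) : Set V := {v | v ∈ Rect n m ∧ v.1 = (n : ℤ)}

/-- There is a path (for the adjacency `adj`), all of whose vertices lie in the
region `R` and satisfy the predicate `good`, from the set `A` to the set `B`. -/
def HasCrossing (adj : V → V → Prop) (good : V → Prop) (R A B : Set V) : Prop :=
  ∃ (k : ℕ) (f : Fin (k + 1) → V),
    (∀ i, f i ∈ R ∧ good (f i)) ∧
    (∀ i : Fin k, adj (f i.castSucc) (f i.succ)) ∧
    f 0 ∈ A ∧ f (Fin.last k) ∈ B

/-- `V^b_{n,m}` as a set of colour configurations: there is a black vertical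
crossing of `S_{n,m}` (for the adjacency `adj`). -/
def VertBC (adj : V → V → Prop) (n m : ℕ) : Set ColourCfg :=
  {ξ | HasCrossing adj (fun v => ξ v = true) (Rect n m) (TopSide n m) (BotSide n m)}

/-- `V^{w*}_{n,m}` as a set of colour configurations: there is a white vertical
`*`-crossing of `S_{n,m}`. -/
def VertWStarC (n m : ℕ) : Set ColourCfg :=
  {ξ | HasCrossing StarAdj (fun v => ξ v = false) (Rect n m) (TopSide n m) (BotSide n m)}

/-- `H^{w*}_{n,m}` as a set of colour configurations: there is a white
horizontal `*`-crossing of `S_{n,m}`. -/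
def HorizWStarC (n m : ℕ) : Set ColourCfg :=
  {ξ | HasCrossing StarAdj (fun v => ξ v = false) (Rect n m) (LeftSide n m) (RightSide n m)}

/-- The event (set of full configurations) determined by a set of colour
configurations. -/
def colourEvent (C : Set ColourCfg) : Set Config := {ω | ω.2 ∈ C}

/-! ### Events depending on colours, increasing events, pivotal clusters -/

/-- The event `A` is defined in terms of the colours of the vertices in `W`. -/
def DependsOnColoursIn (A : Set Config) (W : Set V) : Prop :=
  ∀ ω ω' : Config, (∀ v ∈ W, ω.2 v = ω'.2 v) → (ω ∈ A ↔ ω' ∈ A)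

/-- The event `A` is increasing (for the partial order comparing colour
configurations pointwise, black = `true` above white = `false`). -/
def IncreasingColourEvent (A : Set Config) : Prop :=
  ∀ ω ω' : Config, (∀ v : V, ω.2 v = true → ω'.2 v = true) → ω ∈ A → ω' ∈ A

/-- Flip the colours of the vertices of `C`. -/
noncomputable def flipOn (C : Set V) (ξ : ColourCfg) : ColourCfg :=
  fun v => @ite _ (v ∈ C) (Classical.propDecidable _) (!ξ v) (ξ v)

/-- The set `C` is a pivotal `p`-cluster for the event `A` in the
configuration `ω`: `C` is a `p`-cluster of the edge configuration of `ω`, and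
flipping the colour of (all the vertices of) `C` changes whether the
configuration belongs to `A`. -/
def IsPivotal (A : Set Config) (ω : Config) (C : Set V) : Prop :=
  (∃ v : V, C = pCluster ω.1 v) ∧ ¬ (ω ∈ A ↔ (ω.1, flipOn C ω.2) ∈ A)

/-- `n(A)`: the number of pivotal `p`-clusters for the event `A`, with values
in `ℝ≥0∞`. -/
noncomputable def numPivotal (A : Set Config) (ω : Config) : ℝ≥0∞ :=
  {C : Set V | IsPivotal A ω C}.encard

/-! ### Barriers -/

/-- Connectivity in the square lattice avoiding the edges of `E`. -/
def AvoidConn (E : Set (V × V)) (u v : V) : Prop :=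
  Relation.ReflTransGen (fun a b => SqAdj a b ∧ (a, b) ∉ E ∧ (b, a) ∉ E) u v

/-- `E` is a barrier: a set of edges of the square lattice whose removal
(keeping the end-vertices) separates `ℤ²` into two or more connected
components, exactly one of which is infinite. -/
def IsBarrier (E : Set (V × V)) : Prop :=
  (∀ e ∈ E, SqAdj e.1 e.2) ∧
  (∃ v, {w | AvoidConn E v w}.Infinite) ∧
  (∀ v w, {x | AvoidConn E v x}.Infinite → {x | AvoidConn E w x}.Infinite → AvoidConn E v w) ∧
  (∃ v, {w | AvoidConn E v w}.Finite)

/-- The exterior of a barrier: its unique infinite complementary component. -/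
def barrierExt (E : Set (V × V)) : Set V := {v | {w | AvoidConn E v w}.Infinite}

/-- The interior of a barrier: the union of the finite complementary components. -/
def barrierInt (E : Set (V × V)) : Set V := {v | {w | AvoidConn E v w}.Finite}

/-- The event `A ⊆ EdgeCfg` is increasing (opening edges preserves it). -/
def IncreasingEdgeEvent (A : Set EdgeCfg) : Prop :=
  ∀ η η' : EdgeCfg, (∀ a b : V, η a b = true → η' a b = true) → η ∈ A → η' ∈ A

/-- The event `A ⊆ EdgeCfg` depends only on the states of the edges both of
whose endpoints lie in `W`. -/
def DependsOnEdgesIn (A : Set EdgeCfg) (W : Set V) : Prop :=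
  ∀ η η' : EdgeCfg, (∀ a b : V, a ∈ W → b ∈ W → η a b = η' a b) → (η ∈ A ↔ η' ∈ A)

/-! ### Translations -/

/-- Translation of configurations by the vector `u`. -/
def shift (u : V) (ω : Config) : Config :=
  (fun a b => ω.1 (a + u) (b + u), fun a => ω.2 (a + u))

end DaC
namespace DaC

/-- Lattice edges: base vertex and direction (`true` = vertical). -/
abbrev Ed : Type := V × Bool

/-- First endpoint. -/
def src (e : Ed) : V := e.1

/-- Second endpoint. -/
def tgt (e : Ed) : V := if e.2 then (e.1.1, e.1.2 + 1) else (e.1.1 + 1, e.1.2)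

/-- `u` and `v` are the two endpoints of the edge `e`. -/
def Ends (e : Ed) (u v : V) : Prop := (src e = u ∧ tgt e = v) ∨ (src e = v ∧ tgt e = u)

/-- One step through an edge of `O`. -/
def Step (O : Set Ed) (u v : V) : Prop := ∃ e ∈ O, Ends e u v

/-- Connectivity through edges of `O`. -/
def Cn (O : Set Ed) (u v : V) : Prop := Relation.ReflTransGen (Step O) u v

lemma Ends.symm {e : Ed} {u v : V} (h : Ends e u v) : Ends e v u := Or.symm h

lemma Step.symm {O : Set Ed} {u v : V} (h : Step O u v) : Step O v u := by
  obtain ⟨e, he, h⟩ := h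
  exact ⟨e, he, h.symm⟩

lemma Cn.refl (O : Set Ed) (u : V) : Cn O u u := Relation.ReflTransGen.refl

lemma Cn.symm {O : Set Ed} {u v : V} (h : Cn O u v) : Cn O v u := by
  induction h with
  | refl => exact Cn.refl _ _
  | tail _ h ih => exact Relation.ReflTransGen.head h.symm ih

lemma Cn.trans {O : Set Ed} {u v w : V} (h : Cn O u v) (h' : Cn O v w) : Cn O u w :=
  Relation.ReflTransGen.trans h h'

lemma Cn.mono {O O' : Set Ed} (hO : O ⊆ O') {u v : V} (h : Cn O u v) : Cn O' u v :=
  Relation.ReflTransGen.mono (fun _ _ ⟨e, he, h⟩ => ⟨e, hO he, h⟩) _ _ h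

lemma Cn.step {O : Set Ed} {u v : V} (h : Step O u v) : Cn O u v := Relation.ReflTransGen.single h

/-- Component of `v`. -/
def Comp (O : Set Ed) (v : V) : Set V := {w | Cn O v w}

lemma Comp.mono {O O' : Set Ed} (hO : O ⊆ O') (v : V) : Comp O v ⊆ Comp O' v :=
  fun _ h => Cn.mono hO h

/-- removing edges of a set `E` joining vertices of `B` : every vertex of the cluster of `B`
is still connected to `B`. -/
lemma exists_cn_diff {O E : Set Ed} {B : Set V} (hB : ∀ e ∈ E, src e ∈ B ∧ tgt e ∈ B)
    {u w : V} (hu : u ∈ B) (h : Cn O u w) : ∃ y ∈ B, Cn (O \ E) y w := by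
  induction h with
  | refl => exact ⟨u, hu, Cn.refl _ _⟩
  | @tail b c _ h ih =>
    obtain ⟨e, he, hE⟩ := h
    by_cases heE : e ∈ E
    · refine ⟨c, ?_, Cn.refl _ _⟩
      rcases hE with ⟨_, h⟩ | ⟨h, _⟩
      · exact h ▸ (hB e heE).2
      · exact h ▸ (hB e heE).1
    · obtain ⟨y, hy, hyb⟩ := ih
      exact ⟨y, hy, hyb.trans (Cn.step ⟨e, ⟨he, heE⟩, hE⟩)⟩

lemma cn_avoid {O E E' : Set Ed} {B : Set V} (hB : ∀ e ∈ E, src e ∈ B ∧ tgt e ∈ B)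
    {y : V} (hy : ∀ z ∈ B, ¬ Cn (O \ E') y z) {w : V} (h : Cn (O \ E') y w) :
    Cn (O \ E) y w := by
  induction h with
  | refl => exact Cn.refl _ _
  | @tail b c hb h ih =>
    obtain ⟨e, he, hE⟩ := h
    refine ih.trans (Cn.step ⟨e, ⟨he.1, fun heE => ?_⟩, hE⟩)
    rcases hE with ⟨h, _⟩ | ⟨_, h⟩
    · exact hy b (h ▸ (hB e heE).1) hb
    · exact hy b (h ▸ (hB e heE).2) hb

/-- smallest code of an element of `S` connected to `v`. -/
noncomputable def minCode (S : Finset V) (O : Set Ed) (v : V) : ℕ :=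
  sInf (Encodable.encode '' {s | s ∈ S ∧ Cn O v s})

lemma minCode_spec {S : Finset V} {O : Set Ed} {v : V} (h : ∃ s ∈ S, Cn O v s) :
    ∃ s ∈ S, Cn O v s ∧ Encodable.encode s = minCode S O v := by
  have : (Encodable.encode '' {s | s ∈ S ∧ Cn O v s}).Nonempty := by
    obtain ⟨s, hs, h⟩ := h
    exact ⟨_, s, ⟨hs, h⟩, rfl⟩
  obtain ⟨s, hs, h⟩ := Nat.sInf_mem this
  exact ⟨s, hs.1, hs.2, h⟩

lemma minCode_le {S : Finset V} {O : Set Ed} {v s : V} (hs : s ∈ S) (h : Cn O v s) :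
    minCode S O v ≤ Encodable.encode s := Nat.sInf_le ⟨s, ⟨hs, h⟩, rfl⟩

lemma minCode_congr {S : Finset V} {O : Set Ed} {v w : V} (h : Cn O v w) :
    minCode S O v = minCode S O w := by
  unfold minCode
  congr 2
  ext s
  exact ⟨fun ⟨a, b⟩ => ⟨a, h.symm.trans b⟩, fun ⟨a, b⟩ => ⟨a, h.trans b⟩⟩

/-- **Burton–Keane counting lemma.** -/
theorem burton_keane {ι : Type*} (O : Set Ed) (S : Finset V) (T : Finset ι)
    (E : ι → Set Ed) (B : ι → Set V) (x : ι → Fin 3 → V)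
    (hEO : ∀ t ∈ T, E t ⊆ O)
    (hB : ∀ t ∈ T, ∀ e ∈ E t, src e ∈ B t ∧ tgt e ∈ B t)
    (hconn : ∀ t ∈ T, ∀ u ∈ B t, ∀ v ∈ B t, Cn (E t) u v)
    (hdisj : ∀ t ∈ T, ∀ t' ∈ T, t ≠ t' → Disjoint (E t) (E t'))
    (hx : ∀ t ∈ T, ∀ i, x t i ∈ B t)
    (hsep : ∀ t ∈ T, ∀ i j, i ≠ j → ¬ Cn (O \ E t) (x t i) (x t j))
    (hS : ∀ t ∈ T, ∀ i, ∃ s ∈ S, Cn (O \ E t) (x t i) s) : T.card ≤ S.card := by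
  classical
  have key : ∀ t, ∃ a b : V, t ∈ T → a ∈ B t ∧ b ∈ B t ∧ ¬ Cn (O \ E t) a b ∧
      (∃ s ∈ S, Cn (O \ E t) a s) ∧ (∃ s ∈ S, Cn (O \ E t) b s) ∧
      ∀ s ∈ S, Cn O a s → Encodable.encode s = minCode S O a →
        ¬ Cn (O \ E t) a s ∧ ¬ Cn (O \ E t) b s := by
    intro t
    by_cases ht : t ∈ T
    swap
    · exact ⟨origin, origin, fun h => absurd h ht⟩
    have hO : ∀ i, Cn O (x t 0) (x t i) := fun i =>
      (hconn t ht _ (hx t ht 0) _ (hx t ht i)).mono (hEO t ht)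
    have hcode : ∀ i, minCode S O (x t i) = minCode S O (x t 0) :=
      fun i => (minCode_congr (hO i)).symm
    obtain ⟨ρ, hρS, hρ, hρc⟩ := minCode_spec (S := S) (O := O) (v := x t 0) (by
      obtain ⟨s, hs, h⟩ := hS t ht 0
      exact ⟨s, hs, h.mono Set.sdiff_subset⟩)
    have huniq : ∀ s, ∀ i, Encodable.encode s = minCode S O (x t i) → s = ρ := by
      intro s i h
      rw [hcode, ← hρc] at h
      exact Encodable.encode_injective h
    have : ∃ i j, i ≠ j ∧ ¬ Cn (O \ E t) (x t i) ρ ∧ ¬ Cn (O \ E t) (x t j) ρ := by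
      by_contra! hcon
      have h2 : ∀ i j, i ≠ j → Cn (O \ E t) (x t i) ρ → ¬ Cn (O \ E t) (x t j) ρ :=
        fun i j hij h1 h2 => hsep t ht i j hij (h1.trans h2.symm)
      have a1 := hcon 0 1 (by decide)
      have a2 := hcon 1 2 (by decide)
      have a3 := hcon 0 2 (by decide)
      have b1 := h2 0 1 (by decide)
      have b2 := h2 1 2 (by decide)
      have b3 := h2 0 2 (by decide)
      tauto
    obtain ⟨i, j, hij, h1, h2⟩ := this
    refine ⟨x t i, x t j, fun _ => ⟨hx t ht i, hx t ht j, hsep t ht i j hij, hS t ht i,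
      hS t ht j, fun s _ _ hs => ?_⟩⟩
    rw [huniq s i hs]
    exact ⟨h1, h2⟩
  choose a b hab using key
  let g : ι → ℕ := fun t => max (minCode S (O \ E t) (a t)) (minCode S (O \ E t) (b t))
  -- the two special elements
  have hg : ∀ t ∈ T, ∃ s ∈ S, ∃ s' ∈ S, ∃ y ∈ B t, ∃ y' ∈ B t, Encodable.encode s = g t ∧
      Encodable.encode s' < g t ∧ (y = a t ∨ y = b t) ∧ (y' = a t ∨ y' = b t) ∧
      Cn (O \ E t) y s ∧ Cn (O \ E t) y' s' ∧ g t = minCode S (O \ E t) y := by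
    intro t ht
    obtain ⟨ha, hb, hn, hSa, hSb, -⟩ := hab t ht
    obtain ⟨s, hs, h1, h2⟩ := minCode_spec hSa
    obtain ⟨s', hs', h1', h2'⟩ := minCode_spec hSb
    have hne : minCode S (O \ E t) (a t) ≠ minCode S (O \ E t) (b t) := by
      intro h
      rw [← h2, ← h2'] at h
      have := Encodable.encode_injective h
      subst this
      exact hn (h1.trans h1'.symm)
    rcases lt_or_gt_of_ne hne with h | h
    · have hgt : g t = minCode S (O \ E t) (b t) := max_eq_right h.le
      exact ⟨s', hs', s, hs, b t, hb, a t, ha, by rw [h2', hgt], by rw [h2, hgt]; exact h,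
        Or.inr rfl, Or.inl rfl, h1', h1, hgt⟩
    · have hgt : g t = minCode S (O \ E t) (a t) := max_eq_left h.le
      exact ⟨s, hs, s', hs', a t, ha, b t, hb, by rw [h2, hgt], by rw [h2', hgt]; exact h,
        Or.inl rfl, Or.inr rfl, h1, h1', hgt⟩
  have hconn' : ∀ t ∈ T, ∀ t' ∈ T, t ≠ t' → ∀ u ∈ B t, ∀ v ∈ B t, Cn (O \ E t') u v := by
    intro t ht t' ht' hne u hu v hv
    refine Cn.mono (O := E t) (O' := O \ E t') (fun e he => ⟨hEO t ht he, fun he' => ?_⟩)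
      (hconn t ht u hu v hv)
    exact Set.disjoint_left.1 (hdisj t ht t' ht' hne) he he'
  have case1 : ∀ t ∈ T, ∀ t' ∈ T, t ≠ t' → g t = g t' → ∀ ρ : V,
      ¬ Cn (O \ E t) (a t) ρ → ¬ Cn (O \ E t) (b t) ρ →
      ∀ z' ∈ B t', Cn (O \ E t) ρ z' → False := by
    intro t ht t' ht' hne hgg ρ hρa hρb z' hz' hρz
    obtain ⟨s, hs, s', hs', y, hy, y', hy', e1, e2, hyab, hyab', c1, c2, -⟩ := hg t ht
    obtain ⟨r, hr, r', hr', w, hw, w', hw', e1', e2', hwab, hwab', d1, d2, hgm⟩ := hg t' ht'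
    have hsr : s = r := Encodable.encode_injective (by rw [e1, e1', hgg])
    subst hsr
    have hny : ∀ y, (y = a t ∨ y = b t) → ∀ z ∈ B t', ¬ Cn (O \ E t) y z := by
      intro y hy z hz h
      have : Cn (O \ E t) y ρ :=
        (h.trans (hconn' t' ht' t ht hne.symm z hz z' hz')).trans hρz.symm
      rcases hy with rfl | rfl
      · exact hρa this
      · exact hρb this
    have k1 := cn_avoid (hB t' ht') (hny y hyab) c1
    have k2 := cn_avoid (hB t' ht') (hny y' hyab') c2
    have k3 := hconn' t ht t' ht' hne y hy y' hy'
    have : Cn (O \ E t') w s' := d1.trans (k1.symm.trans (k3.trans k2))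
    have := minCode_le hs' this
    omega
  refine (Finset.card_le_card_of_injOn g (t := S.image Encodable.encode) ?_ ?_).trans
    Finset.card_image_le
  · intro t ht
    obtain ⟨s, hs, -, -, -, -, -, -, h, -⟩ := hg t ht
    simp only [Finset.coe_image, Set.mem_image]
    exact ⟨s, hs, h⟩
  · intro t ht t' ht' hgg
    by_contra hne
    have ht : t ∈ T := ht
    have ht' : t' ∈ T := ht'
    have hOs : ∀ t ∈ T, ∃ s ∈ S, Encodable.encode s = g t ∧ Cn O (a t) s := by
      intro t ht
      obtain ⟨s, hs, s', hs', y, hy, y', hy', e1, e2, hyab, hyab', c1, c2, -⟩ := hg t ht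
      refine ⟨s, hs, e1, ?_⟩
      exact ((hconn t ht (a t) (hab t ht).1 y hy).mono (hEO t ht)).trans
        (c1.mono Set.sdiff_subset)
    obtain ⟨s, hs, e1, o1⟩ := hOs t ht
    obtain ⟨s', hs', e1', o1'⟩ := hOs t' ht'
    have hss : s = s' := Encodable.encode_injective (by rw [e1, e1', hgg])
    subst hss
    have haa : Cn O (a t) (a t') := o1.trans o1'.symm
    obtain ⟨ρ, hρS, hρ, hρc⟩ := minCode_spec (S := S) (O := O) (v := a t) ⟨s, hs, o1⟩
    obtain ⟨ha, hb, hn, hSa, hSb, hroot⟩ := hab t ht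
    obtain ⟨ha', hb', hn', hSa', hSb', hroot'⟩ := hab t' ht'
    have r1 := hroot ρ hρS hρ hρc
    have r2 := hroot' ρ hρS (haa.symm.trans hρ) (by rw [hρc, minCode_congr haa])
    by_cases hD : Cn (O \ E t) ρ (a t')
    · exact case1 t ht t' ht' hne hgg ρ r1.1 r1.2 (a t') ha' hD
    · obtain ⟨y, hy, hyρ⟩ := exists_cn_diff (hB t ht) ha hρ
      have : ∀ z ∈ B t', ¬ Cn (O \ E t) y z := by
        intro z hz h
        exact hD (hyρ.symm.trans (h.trans (hconn' t' ht' t ht (Ne.symm hne) z hz _ ha')))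
      have := cn_avoid (hB t' ht') this hyρ
      exact case1 t' ht' t ht (Ne.symm hne) hgg.symm ρ r2.1 r2.2 y hy this.symm

end DaC

namespace DaC

/-- The primal box `[1-n,n]²`. -/
def Lam (n : ℤ) : Set V := {v | 1 - n ≤ v.1 ∧ v.1 ≤ n ∧ 1 - n ≤ v.2 ∧ v.2 ≤ n}

/-- Edges touching the primal box. -/
def Eplus (n : ℤ) : Set Ed := {e | src e ∈ Lam n ∨ tgt e ∈ Lam n}

/-- Edges inside the primal box. -/
def Elam (n : ℤ) : Set Ed := {e | src e ∈ Lam n ∧ tgt e ∈ Lam n}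

/-- The dual box `[-n,n]²`. -/
def Dbox (n : ℤ) : Set V := {v | -n ≤ v.1 ∧ v.1 ≤ n ∧ -n ≤ v.2 ∧ v.2 ≤ n}

/-- Edges inside the dual box. -/
def Ein (n : ℤ) : Set Ed := {e | src e ∈ Dbox n ∧ tgt e ∈ Dbox n}

/-- The primal edge crossed by a dual edge (the dual vertex `(i,j)` is the face
`[i,i+1]×[j,j+1]`). -/
def cross (e : Ed) : Ed := if e.2 then ((e.1.1, e.1.2 + 1), false) else ((e.1.1 + 1, e.1.2), true)

@[simp] lemma src_mk (v : V) (b : Bool) : src (v, b) = v := rfl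
@[simp] lemma tgt_true (i j : ℤ) : tgt ((i, j), true) = (i, j + 1) := rfl
@[simp] lemma tgt_false (i j : ℤ) : tgt ((i, j), false) = (i + 1, j) := rfl
@[simp] lemma cross_true (i j : ℤ) : cross ((i, j), true) = ((i, j + 1), false) := rfl
@[simp] lemma cross_false (i j : ℤ) : cross ((i, j), false) = ((i + 1, j), true) := rfl

lemma cross_mem_Eplus {n : ℤ} (hn : 1 ≤ n) (e : Ed) : cross e ∈ Eplus n ↔ e ∈ Ein n := by
  obtain ⟨⟨i, j⟩, b⟩ := e
  cases b <;> simp [Eplus, Ein, Lam, Dbox] <;> omega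

lemma conn_box {O : Set Ed} {a b c d : ℤ}
    (hO : ∀ e : Ed, (a ≤ (src e).1 ∧ (src e).1 ≤ b ∧ c ≤ (src e).2 ∧ (src e).2 ≤ d) →
      (a ≤ (tgt e).1 ∧ (tgt e).1 ≤ b ∧ c ≤ (tgt e).2 ∧ (tgt e).2 ≤ d) → e ∈ O)
    {u v : V} (hu : a ≤ u.1 ∧ u.1 ≤ b ∧ c ≤ u.2 ∧ u.2 ≤ d)
    (hv : a ≤ v.1 ∧ v.1 ≤ b ∧ c ≤ v.2 ∧ v.2 ≤ d) : Cn O u v := by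
  have hor : ∀ y, c ≤ y → y ≤ d → ∀ x, a ≤ x → x ≤ b → Cn O (a, y) (x, y) := by
    intro y hy hy' x hx
    induction x, hx using Int.leInduction with
    | base => intro _; exact Cn.refl _ _
    | succ x hx ih =>
      intro hxb
      refine (ih (by omega)).trans (Cn.step ⟨((x, y), false), hO _ ?_ ?_, Or.inl ⟨rfl, rfl⟩⟩)
      · simp; omega
      · simp; omega
  have ver : ∀ x, a ≤ x → x ≤ b → ∀ y, c ≤ y → y ≤ d → Cn O (x, c) (x, y) := by
    intro x hx hx' y hy
    induction y, hy using Int.leInduction with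
    | base => intro _; exact Cn.refl _ _
    | succ y hy ih =>
      intro hyb
      refine (ih (by omega)).trans (Cn.step ⟨((x, y), true), hO _ ?_ ?_, Or.inl ⟨rfl, rfl⟩⟩)
      · simp; omega
      · simp; omega
  have key : ∀ u : V, (a ≤ u.1 ∧ u.1 ≤ b ∧ c ≤ u.2 ∧ u.2 ≤ d) → Cn O (a, c) u := by
    rintro ⟨x, y⟩ ⟨h1, h2, h3, h4⟩
    exact (ver a le_rfl (h1.trans h2) y h3 h4).trans (hor y h3 h4 x h1 h2)
  exact (key u hu).symm.trans (key v hv)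

lemma conn_Lam {n : ℤ} {u v : V} (hu : u ∈ Lam n) (hv : v ∈ Lam n) : Cn (Elam n) u v :=
  conn_box (O := Elam n) (a := 1 - n) (b := n) (c := 1 - n) (d := n)
    (fun _ h1 h2 => ⟨h1, h2⟩) hu hv

/-- Boundary of a mod 2 chain. -/
def bd (C : Ed → ZMod 2) (v : V) : ZMod 2 :=
  C ((v.1, v.2), false) + C ((v.1 - 1, v.2), false) + C ((v.1, v.2), true) + C ((v.1, v.2 - 1), true)

lemma bd_add (C C' : Ed → ZMod 2) (v : V) : bd (fun e => C e + C' e) v = bd C v + bd C' v := by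
  simp only [bd]; ring

/-- Indicator mod 2. -/
def dl {α : Type*} [DecidableEq α] (a b : α) : ZMod 2 := if a = b then 1 else 0

lemma bd_single {e : Ed} {u v : V} (h : Ends e u v) (w : V) :
    bd (fun e' => dl e' e) w = dl w u + dl w v := by
  obtain ⟨⟨i, j⟩, b⟩ := e
  obtain ⟨x, y⟩ := w
  have key : bd (fun e' => dl e' ((i, j), b)) (x, y)
      = dl (x, y) (src ((i, j), b)) + dl (x, y) (tgt ((i, j), b)) := by
    cases b
    · have h1 : ((x - 1 = i ∧ y = j) ↔ (x = i + 1 ∧ y = j)) := by omega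
      simp [bd, dl, h1]
    · have h1 : ((x = i ∧ y - 1 = j) ↔ (x = i ∧ y = j + 1)) := by omega
      simp [bd, dl, h1]
  rw [key]
  rcases h with ⟨rfl, rfl⟩ | ⟨rfl, rfl⟩
  · rfl
  · rw [add_comm]

lemma z2 (a : ZMod 2) : a + a = 0 := CharTwo.add_self_eq_zero a

lemma exists_chain {O : Set Ed} {u v : V} (h : Cn O u v) :
    ∃ C : Ed → ZMod 2, (Function.support C).Finite ∧ (∀ e, e ∉ O → C e = 0) ∧
      ∀ w, bd C w = dl w u + dl w v := by
  induction h with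
  | refl => exact ⟨fun _ => 0, by simp, by simp, fun w => by simp [bd, z2]⟩
  | @tail b c _ h ih =>
    obtain ⟨C, hf, hO, hbd⟩ := ih
    obtain ⟨e, he, hE⟩ := h
    refine ⟨fun e' => C e' + dl e' e, ?_, ?_, ?_⟩
    · refine (hf.union (Set.finite_singleton e)).subset fun e' he' => ?_
      by_contra hcon
      simp only [Set.mem_union, Set.mem_singleton_iff, not_or, Function.mem_support, not_not] at hcon
      apply he'
      simp [dl, hcon]
    · intro e' he'
      have : e' ≠ e := fun h => he' (h ▸ he)
      simp [dl, hO e' he', this]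
    · intro w
      rw [bd_add, hbd, bd_single hE]
      have := z2 (dl w b)
      linear_combination this

lemma support_bound {C : Ed → ZMod 2} (h : (Function.support C).Finite) :
    ∃ M : ℤ, 0 ≤ M ∧ ∀ i j b, (M ≤ |i| ∨ M ≤ |j|) → C ((i, j), b) = 0 := by
  classical
  refine ⟨∑ e ∈ h.toFinset, (|e.1.1| + |e.1.2| + 1), ?_, ?_⟩
  · exact Finset.sum_nonneg fun _ _ => by positivity
  · intro i j b hM
    by_contra hne
    have : ((i, j), b) ∈ h.toFinset := by simpa using hne
    have h2 := Finset.single_le_sum (f := fun e : Ed => |e.1.1| + |e.1.2| + 1)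
      (fun _ _ => by positivity) this
    simp only at h2
    have := abs_nonneg i
    have := abs_nonneg j
    omega

lemma exists_potential {C : Ed → ZMod 2} (h : (Function.support C).Finite)
    (hbd : ∀ v, bd C v = 0) :
    ∃ w : V → ZMod 2, (∃ M : ℤ, ∀ i j, (M ≤ |i| ∨ M ≤ |j|) → w (i, j) = 0) ∧
      ∀ e, w (src e) + w (tgt e) = C (cross e) := by
  obtain ⟨M, hM0, hM⟩ := support_bound h
  let w : V → ZMod 2 := fun v => ∑ k ∈ Finset.Ioc v.2 M, C ((v.1, k), false)
  have hv : ∀ i j, w (i, j) + w (i, j + 1) = C ((i, j + 1), false) := by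
    intro i j
    by_cases hj : j < M
    · have : Finset.Ioc j M = insert (j + 1) (Finset.Ioc (j + 1) M) := by
        ext k; simp only [Finset.mem_Ioc, Finset.mem_insert]; omega
      simp only [w]
      rw [this, Finset.sum_insert (by simp), add_assoc, z2, add_zero]
    · simp only [w]
      rw [Finset.Ioc_eq_empty (by omega), Finset.Ioc_eq_empty (by omega),
        hM _ _ _ (Or.inr (by rw [le_abs]; omega))]
      simp
  have hh : ∀ i j, w (i, j) + w (i + 1, j) = C ((i + 1, j), true) := by
    intro i
    have top : ∀ j, M ≤ j → w (i, j) + w (i + 1, j) = C ((i + 1, j), true) := by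
      intro j hj
      simp only [w]
      rw [Finset.Ioc_eq_empty (by omega), hM _ _ _ (Or.inr (by rw [le_abs]; omega))]
      simp
    intro j
    by_cases hj : M ≤ j
    · exact top j hj
    · have hj : j ≤ M := by omega
      induction j, hj using Int.leInductionDown with
      | base => exact top M le_rfl
      | pred j hj ih =>
        by_cases hjM : M ≤ j
        · have h0 := hbd (i + 1, j)
          simp only [bd, add_sub_cancel_right] at h0
          have h1 := hv i (j - 1)
          have h2 := hv (i + 1) (j - 1)
          rw [sub_add_cancel] at h1 h2
          have h3 := top j hjM
          have a1 := z2 (w (i, j))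
          have a2 := z2 (w (i + 1, j))
          have a3 := z2 (C ((i + 1, j - 1), true))
          have a4 := z2 (C ((i + 1, j), true))
          linear_combination h1 + h2 - h3 + h0 - a3 - a4
        · have h0 := hbd (i + 1, j)
          simp only [bd, add_sub_cancel_right] at h0
          have h1 := hv i (j - 1)
          have h2 := hv (i + 1) (j - 1)
          rw [sub_add_cancel] at h1 h2
          have h3 := ih (by omega)
          have a3 := z2 (C ((i + 1, j - 1), true))
          have a4 := z2 (C ((i + 1, j), true))
          linear_combination h1 + h2 - h3 + h0 - a3 - a4
  refine ⟨w, ⟨M + 1, ?_⟩, ?_⟩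
  · -- vanishing far away
    have hI : ∀ i j, M ≤ |i| → w (i, j) = 0 := by
      intro i j hi
      exact Finset.sum_eq_zero fun k _ => hM _ _ _ (Or.inl hi)
    intro i j hij
    rcases hij with hi | hj
    · exact hI i j (by omega)
    · rcases le_abs.1 hj with hj | hj
      · simp only [w]
        rw [Finset.Ioc_eq_empty (by omega)]
        simp
      · have hstep : ∀ i, w (i, j) = w (i + 1, j) := by
          intro i
          have h1 := hh i j
          rw [hM _ _ _ (Or.inr (by rw [le_abs]; omega))] at h1
          have := z2 (w (i + 1, j))
          linear_combination h1 - this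
        have hconst : ∀ i, M ≤ i → w (i, j) = 0 := fun i hi => hI i j (by rw [le_abs]; omega)
        by_cases hi : M ≤ i
        · exact hconst i hi
        · have hi : i ≤ M := by omega
          induction i, hi using Int.leInductionDown with
          | base => exact hconst M le_rfl
          | pred i hi ih =>
            rw [hstep, sub_add_cancel]
            by_cases hiM : M ≤ i
            · exact hconst i hiM
            · exact ih (by omega)
  · rintro ⟨⟨i, j⟩, b⟩
    cases b
    · exact hh i j
    · exact hv i j

lemma w_zero_of_infinite {w : V → ZMod 2} {D : Set Ed}
    (hM : ∃ M : ℤ, ∀ i j, (M ≤ |i| ∨ M ≤ |j|) → w (i, j) = 0)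
    (hD : ∀ e ∈ D, w (src e) = w (tgt e)) {f : V} (hf : (Comp D f).Infinite) : w f = 0 := by
  obtain ⟨M, hM⟩ := hM
  have hconst : ∀ g, Cn D f g → w f = w g := by
    intro g h
    induction h with
    | refl => rfl
    | tail _ h ih =>
      obtain ⟨e, he, ⟨rfl, rfl⟩ | ⟨rfl, rfl⟩⟩ := h
      · rw [ih, hD e he]
      · rw [ih, hD e he]
  by_contra hne
  apply hf
  refine ((Set.finite_Icc (-M) M).prod (Set.finite_Icc (-M) M)).subset ?_
  rintro ⟨i, j⟩ hg
  by_contra hcon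
  apply hne
  rw [hconst _ hg]
  apply hM
  simp only [Set.mem_prod, Set.mem_Icc, not_and_or, not_le] at hcon
  rw [le_abs, le_abs]
  omega

lemma exists_w {n : ℤ} (hn : 1 ≤ n) {O : Set Ed} {x1 x2 y1 y2 : V} {e1 e2 : Ed}
    (h1 : Ends e1 x1 y1) (h2 : Ends e2 x2 y2) (hx1 : x1 ∉ Lam n) (hx2 : x2 ∉ Lam n)
    (hy1 : y1 ∈ Lam n) (hy2 : y2 ∈ Lam n) (h : Cn (O \ Eplus n) x1 x2) :
    ∃ w : V → ZMod 2, (∀ f, (Comp {e | cross e ∉ O ∧ e ∉ Ein n} f).Infinite → w f = 0) ∧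
      ∀ e, cross e ∈ Eplus n → cross e ∉ Elam n →
        w (src e) + w (tgt e) = dl (cross e) e1 + dl (cross e) e2 := by
  obtain ⟨C1, f1, o1, b1⟩ := exists_chain h
  obtain ⟨C2, f2, o2, b2⟩ := exists_chain (conn_Lam hy1 hy2)
  have he1 : e1 ∈ Eplus n := by
    rcases h1 with ⟨_, rfl⟩ | ⟨rfl, _⟩
    · exact Or.inr hy1
    · exact Or.inl hy1
  have he2 : e2 ∈ Eplus n := by
    rcases h2 with ⟨_, rfl⟩ | ⟨rfl, _⟩
    · exact Or.inr hy2
    · exact Or.inl hy2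
  let C : Ed → ZMod 2 := fun e => (C1 e + C2 e) + (dl e e1 + dl e e2)
  have hC : (Function.support C).Finite := by
    refine ((f1.union f2).union ((Set.finite_singleton e1).union (Set.finite_singleton e2))).subset
      fun e he => ?_
    by_contra hcon
    simp only [Set.mem_union, Set.mem_singleton_iff, not_or, Function.mem_support, not_not] at hcon
    apply he
    simp [C, dl, hcon]
  have hb : ∀ v, bd C v = 0 := by
    intro v
    have : bd C v = (bd C1 v + bd C2 v) + (bd (fun e => dl e e1) v + bd (fun e => dl e e2) v) := by
      simp only [C, bd]; ring
    rw [this, b1, b2, bd_single h1, bd_single h2]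
    have a1 := z2 (dl v x1)
    have a2 := z2 (dl v x2)
    have a3 := z2 (dl v y1)
    have a4 := z2 (dl v y2)
    linear_combination a1 + a2 + a3 + a4
  obtain ⟨w, hM, hw⟩ := exists_potential hC hb
  refine ⟨w, fun f hf => w_zero_of_infinite hM ?_ hf, ?_⟩
  · rintro e ⟨ho, hin⟩
    have hE : cross e ∉ Eplus n := fun h => hin ((cross_mem_Eplus hn e).1 h)
    have hEl : cross e ∉ Elam n := fun h => hE (Or.inl h.1)
    have n1 : cross e ≠ e1 := fun h => hE (h ▸ he1)
    have n2 : cross e ≠ e2 := fun h => hE (h ▸ he2)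
    have := hw e
    simp only [C, o1 _ (fun h => ho h.1), o2 _ hEl, dl, n1, n2, if_false, add_zero] at this
    have a := z2 (w (tgt e))
    linear_combination this - a
  · intro e hE hEl
    rw [hw]
    simp [C, o1 _ (fun h => h.2 hE), o2 _ hEl]

lemma telescope (φ : ℤ → ZMod 2) (a i : ℤ) (m : ℤ) (him : i ≤ m)
    (h : ∀ l, i < l → l ≤ m → φ (l - 1) + φ l = dl l a) :
    φ i + φ m = if i < a ∧ a ≤ m then 1 else 0 := by
  induction m, him using Int.leInduction with
  | base =>
    have : ¬ (i < a ∧ a ≤ i) := by omega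
    simp [this, z2]
  | succ m hm ih =>
    have h1 := ih fun l h1 h2 => h l h1 (by omega)
    have h2 := h (m + 1) (by omega) le_rfl
    rw [add_sub_cancel_right] at h2
    have a1 := z2 (φ m)
    have : φ i + φ (m + 1) = (if i < a ∧ a ≤ m then 1 else 0) + dl (m + 1) a := by
      linear_combination h1 + h2 - a1
    rw [this]
    unfold dl
    by_cases e : m + 1 = a
    · subst e
      simp
      omega
    · have : (i < a ∧ a ≤ m) ↔ (i < a ∧ a ≤ m + 1) := by omega
      simp [e, this]

/-- Dual edges usable by dual arms. -/
def DualOut (n : ℤ) (O : Set Ed) : Set Ed := {e | cross e ∉ O ∧ e ∉ Ein n}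

lemma w_top {n : ℤ} {w : V → ZMod 2} {e1 e2 : Ed}
    (h : ∀ e, cross e ∈ Eplus n → cross e ∉ Elam n →
        w (src e) + w (tgt e) = dl (cross e) e1 + dl (cross e) e2)
    {l : ℤ} (h1 : -n < l) (h2 : l ≤ n) :
    w (l - 1, n) + w (l, n) = dl ((l, n), true) e1 + dl ((l, n), true) e2 := by
  have := h ((l - 1, n), false)
  simp only [cross_false, sub_add_cancel, src_mk, tgt_false] at this
  apply this
  · simp [Eplus, Lam]; omega
  · simp [Elam, Lam]

lemma w_bot {n : ℤ} {w : V → ZMod 2} {e1 e2 : Ed}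
    (h : ∀ e, cross e ∈ Eplus n → cross e ∉ Elam n →
        w (src e) + w (tgt e) = dl (cross e) e1 + dl (cross e) e2)
    {l : ℤ} (h1 : -n < l) (h2 : l ≤ n) :
    w (l - 1, -n) + w (l, -n) = dl ((l, -n), true) e1 + dl ((l, -n), true) e2 := by
  have := h ((l - 1, -n), false)
  simp only [cross_false, sub_add_cancel, src_mk, tgt_false] at this
  apply this
  · simp [Eplus, Lam]; omega
  · simp [Elam, Lam]

lemma w_right {n : ℤ} {w : V → ZMod 2} {e1 e2 : Ed}
    (h : ∀ e, cross e ∈ Eplus n → cross e ∉ Elam n →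
        w (src e) + w (tgt e) = dl (cross e) e1 + dl (cross e) e2)
    {l : ℤ} (h1 : -n < l) (h2 : l ≤ n) :
    w (n, l - 1) + w (n, l) = dl ((n, l), false) e1 + dl ((n, l), false) e2 := by
  have := h ((n, l - 1), true)
  simp only [cross_true, sub_add_cancel, src_mk, tgt_true] at this
  apply this
  · simp [Eplus, Lam]; omega
  · simp [Elam, Lam]

lemma sep_core {n : ℤ} (hn : 1 ≤ n) {O : Set Ed} {i j a : ℤ}
    (hi : -n ≤ i) (hi' : i ≤ 0) (hj : 0 ≤ j) (hj' : j ≤ n)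
    (hf : (Comp (DualOut n O) (i, n)).Infinite) (hf' : (Comp (DualOut n O) (n, j)).Infinite)
    (ha : 1 ≤ a) (ha' : a ≤ n) {x2 y2 : V} {e2 : Ed} (h2 : Ends e2 x2 y2)
    (hx2 : x2 ∉ Lam n) (hy2 : y2 ∈ Lam n)
    (ht : ∀ l, ((l, n), true) ≠ e2) (hr : ∀ l, j < l → l ≤ n → ((n, l), false) ≠ e2) :
    ¬ Cn (O \ Eplus n) (a, n + 1) x2 := by
  intro hc
  obtain ⟨w, hw0, hw⟩ := exists_w hn (e1 := ((a, n), true)) (y1 := (a, n)) (Or.inr ⟨rfl, rfl⟩) h2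
    (by simp [Lam]) hx2 (by simp [Lam]; omega) hy2 hc
  have t1 := telescope (fun l => w (l, n)) a i n (by omega) (by
    intro l h1 h2
    rw [w_top hw (by omega) h2]
    simp [dl, ht])
  have t2 := telescope (fun l => w (n, l)) (n + 1) j n (by omega) (by
    intro l h1 h2
    rw [w_right hw (by omega) h2]
    have : l ≠ n + 1 := by omega
    simp [dl, hr l h1 h2, this])
  simp only [hw0 _ hf, hw0 _ hf'] at t1 t2
  rw [if_pos (by omega)] at t1
  rw [if_neg (by omega)] at t2
  rw [zero_add] at t1 t2
  rw [t1] at t2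
  exact one_ne_zero t2

lemma sep_core' {n : ℤ} (hn : 1 ≤ n) {O : Set Ed} {j k y x : ℤ}
    (hj : 0 ≤ j) (hj' : j ≤ n) (hk : 0 ≤ k) (hk' : k ≤ n)
    (hf : (Comp (DualOut n O) (n, j)).Infinite) (hf' : (Comp (DualOut n O) (k, -n)).Infinite)
    (hy : 1 - n ≤ y) (hy' : y ≤ 0) (hx : 1 - n ≤ x) (hx' : x ≤ 0) :
    ¬ Cn (O \ Eplus n) (n + 1, y) (x, -n) := by
  intro hc
  obtain ⟨w, hw0, hw⟩ := exists_w hn (e1 := ((n, y), false)) (e2 := ((x, -n), true))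
    (y1 := (n, y)) (y2 := (x, -n + 1)) (Or.inr ⟨rfl, rfl⟩) (Or.inl ⟨rfl, rfl⟩)
    (by simp [Lam]) (by simp [Lam]) (by simp [Lam]; omega) (by simp [Lam]; omega) hc
  have t1 := telescope (fun l => w (n, l)) y (-n) j (by omega) (by
    intro l h1 h2
    rw [w_right hw (by omega) (by omega)]
    simp [dl])
  have t2 := telescope (fun l => w (l, -n)) x k n (by omega) (by
    intro l h1 h2
    rw [w_bot hw (by omega) (by omega)]
    simp [dl])
  simp only [hw0 _ hf, hw0 _ hf'] at t1 t2
  rw [if_pos (by omega)] at t1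
  rw [if_neg (by omega)] at t2
  rw [zero_add] at t2
  rw [t2, zero_add] at t1
  exact zero_ne_one t1

/-- Arm event: some vertex of `S` lies in an infinite component of `O \ E`. -/
def Arm (E : Set Ed) (S : Set V) (O : Set Ed) : Prop := ∃ v ∈ S, (Comp (O \ E) v).Infinite

/-- Dual configuration. -/
def dualCfg (O : Set Ed) : Set Ed := {e | cross e ∉ O}

def PT2 (n : ℤ) : Set V := {v | 1 ≤ v.1 ∧ v.1 ≤ n ∧ v.2 = n + 1}
def PR2 (n : ℤ) : Set V := {v | v.1 = n + 1 ∧ 1 - n ≤ v.2 ∧ v.2 ≤ 0}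
def PB2 (n : ℤ) : Set V := {v | 1 - n ≤ v.1 ∧ v.1 ≤ 0 ∧ v.2 = -n}
def DT1 (n : ℤ) : Set V := {v | -n ≤ v.1 ∧ v.1 ≤ 0 ∧ v.2 = n}
def DR1 (n : ℤ) : Set V := {v | v.1 = n ∧ 0 ≤ v.2 ∧ v.2 ≤ n}
def DB1 (n : ℤ) : Set V := {v | 0 ≤ v.1 ∧ v.1 ≤ n ∧ v.2 = -n}

/-- Outer boundary vertices. -/
def Outer (n : ℤ) : Set V := PT2 n ∪ PR2 n ∪ PB2 n

/-- Three separated arms. -/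
def Tri (n : ℤ) (O : Set Ed) : Prop := ∃ x : Fin 3 → V, (∀ i, x i ∈ Outer n) ∧
  (∀ i, (Comp (O \ Eplus n) (x i)).Infinite) ∧
  ∀ i j, i ≠ j → ¬ Cn (O \ Eplus n) (x i) (x j)

theorem tri_of_arms {n : ℤ} (hn : 1 ≤ n) {O : Set Ed}
    (p1 : Arm (Eplus n) (PT2 n) O) (p2 : Arm (Eplus n) (PR2 n) O) (p3 : Arm (Eplus n) (PB2 n) O)
    (d1 : Arm (Ein n) (DT1 n) (dualCfg O)) (d2 : Arm (Ein n) (DR1 n) (dualCfg O))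
    (d3 : Arm (Ein n) (DB1 n) (dualCfg O)) : Tri n O := by
  obtain ⟨⟨a, b⟩, ⟨ha, ha', hb⟩, hA⟩ := p1
  obtain ⟨⟨c, y⟩, ⟨hc, hy, hy'⟩, hB⟩ := p2
  obtain ⟨⟨x, d⟩, ⟨hx, hx', hd⟩, hC⟩ := p3
  obtain ⟨⟨i, i2⟩, ⟨hi, hi', hi2⟩, hD⟩ := d1
  obtain ⟨⟨j2, j⟩, ⟨hj2, hj, hj'⟩, hE⟩ := d2
  obtain ⟨⟨k, k2⟩, ⟨hk, hk', hk2⟩, hF⟩ := d3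
  simp only at *
  subst hb hc hd hi2 hj2 hk2
  have s12 : ¬ Cn (O \ Eplus j2) (a, j2 + 1) (j2 + 1, y) :=
    sep_core hn hi hi' hj hj' hD hE ha ha' (e2 := ((j2, y), false)) (y2 := (j2, y))
      (Or.inr ⟨rfl, rfl⟩) (by simp [Lam]) (by simp [Lam]; omega) (by simp)
      (by intro l h1 h2; simp; omega)
  have s13 : ¬ Cn (O \ Eplus j2) (a, j2 + 1) (x, -j2) :=
    sep_core hn hi hi' hj hj' hD hE ha ha' (e2 := ((x, -j2), true)) (y2 := (x, -j2 + 1))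
      (Or.inl ⟨rfl, rfl⟩) (by simp [Lam]) (by simp [Lam]; omega)
      (by intro l; simp; omega) (by simp)
  have s23 := sep_core' hn hj hj' hk hk' hE hF hy hy' hx hx'
  refine ⟨![(a, j2 + 1), (j2 + 1, y), (x, -j2)], ?_, ?_, ?_⟩
  · intro i
    fin_cases i
    · exact Or.inl (Or.inl ⟨ha, ha', rfl⟩)
    · exact Or.inl (Or.inr ⟨rfl, hy, hy'⟩)
    · exact Or.inr ⟨hx, hx', rfl⟩
  · intro i
    fin_cases i
    · exact hA
    · exact hB
    · exact hC
  · intro i j hij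
    fin_cases i <;> fin_cases j <;> first | exact absurd rfl hij | skip
    · exact s12
    · exact s13
    · exact fun h => s12 h.symm
    · exact s23
    · exact fun h => s13 h.symm
    · exact fun h => s23 h.symm

end DaC

namespace DaC

open ProbabilityTheory in
lemma perm_mp {I : Type*} (m : I → Measure Bool) [∀ i, IsProbabilityMeasure (m i)]
    {τ : I → I} (hinj : Function.Injective τ) (hτ : ∀ i, m (τ i) = m i) :
    MeasurePreserving (fun (x : I → Bool) i => x (τ i)) (Measure.infinitePi m)
      (Measure.infinitePi m) := by
  refine ⟨by fun_prop, ?_⟩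
  rw [Measure.map_infinitePi_infinitePi_of_inj hinj]
  congr 1
  exact funext hτ

open ProbabilityTheory in
lemma cyl_indep {I : Type*} (m : I → Measure Bool) [∀ i, IsProbabilityMeasure (m i)]
    {σ : I → I} (hmp : MeasurePreserving (fun (x : I → Bool) i => x (σ i)) (Measure.infinitePi m)
      (Measure.infinitePi m)) (F : Finset I) (hF : ∀ i ∈ F, σ i ∉ F)
    {S : Set (∀ i : F, Bool)} (hS : MeasurableSet S) :
    Measure.infinitePi m (cylinder (α := fun _ : I => Bool) F S ∩ (fun (x : I → Bool) i => x (σ i)) ⁻¹' cylinder (α := fun _ : I => Bool) F S)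
      = Measure.infinitePi m (cylinder (α := fun _ : I => Bool) F S) * Measure.infinitePi m (cylinder (α := fun _ : I => Bool) F S) := by
  classical
  have hi := iIndepFun_infinitePi (P := m) (X := fun i (b : Bool) => b) (fun i => measurable_id)
  have h2 := hi.indepFun_finset F (F.image σ) (by
    rw [Finset.disjoint_left]
    intro i hi hi'
    obtain ⟨j, hj, rfl⟩ := Finset.mem_image.1 hi'
    exact hF j hj hi) (fun i => measurable_pi_apply i)
  let g : (∀ _ : (F.image σ : Finset I), Bool) → (∀ _ : F, Bool) := fun y i =>
    y ⟨σ i, Finset.mem_image_of_mem σ i.2⟩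
  have hg : Measurable g := by fun_prop
  have h3 := h2.measure_inter_preimage_eq_mul S (g ⁻¹' S) hS (hg hS)
  have h4 : Measure.infinitePi m ((fun (x : I → Bool) i => x (σ i)) ⁻¹' cylinder (α := fun _ : I => Bool) F S)
      = Measure.infinitePi m (cylinder (α := fun _ : I => Bool) F S) :=
    hmp.measure_preimage (hS.cylinder F).nullMeasurableSet
  nth_rewrite 2 [← h4]
  exact h3

theorem zero_one {I : Type*} (m : I → Measure Bool) [∀ i, IsProbabilityMeasure (m i)]
    {τ : I → I} (hinj : Function.Injective τ) (hτ : ∀ i, m (τ i) = m i)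
    (hmix : ∀ F : Finset I, ∃ n : ℕ, ∀ i ∈ F, τ^[n] i ∉ F)
    {A : Set (I → Bool)} (hA : MeasurableSet A)
    (hinv : (fun (x : I → Bool) i => x (τ i)) ⁻¹' A =ᵐ[Measure.infinitePi m] A) :
    Measure.infinitePi m A = 0 ∨ Measure.infinitePi m A = 1 := by
  set P := Measure.infinitePi m with hP
  have hmp := perm_mp m hinj hτ
  have hiter : ∀ n : ℕ, (fun (x : I → Bool) i => x (τ i))^[n] = fun x i => x (τ^[n] i) := by
    intro n
    induction n with
    | zero => rfl
    | succ n ih =>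
      rw [Function.iterate_succ', ih]
      funext x i
      simp only [Function.comp, Function.iterate_succ_apply]
  have key : ∀ ε : ℝ, 0 < ε → |P.real A - P.real A * P.real A| ≤ 4 * ε := by
    intro ε hε
    obtain ⟨C, hC, hCε⟩ := exists_measure_symmDiff_lt_of_generateFrom_isSetRing (μ := P)
      (C := measurableCylinders (fun _ : I => Bool))
      (isSetRing_measurableCylinders)
      ⟨{Set.univ}, by simp, by simpa using univ_mem_measurableCylinders (fun _ : I => Bool), by simp⟩
      generateFrom_measurableCylinders.symm hA (ε := ENNReal.ofReal ε) (by simpa using hε)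
    obtain ⟨F, S, hS, rfl⟩ := (mem_measurableCylinders _).1 hC
    obtain ⟨n, hn⟩ := hmix F
    have hmpn := hmp.iterate n
    rw [hiter] at hmpn
    have hAn : (fun (x : I → Bool) i => x (τ^[n] i)) ⁻¹' A =ᵐ[P] A := by
      have := hmp.quasiMeasurePreserving.preimage_iterate_ae_eq n hinv
      rwa [hiter] at this
    set T : (I → Bool) → (I → Bool) := fun x i => x (τ^[n] i) with hT
    set C := cylinder (α := fun _ : I => Bool) F S with hCdef
    have hCm : MeasurableSet C := hS.cylinder F
    have hind : P.real (C ∩ T ⁻¹' C) = P.real C * P.real C := by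
      simp only [Measure.real, ← ENNReal.toReal_mul]
      rw [cyl_indep m hmpn F hn hS]
    have e1 : P.real (symmDiff C A) ≤ ε := by
      rw [Measure.real]
      exact ENNReal.toReal_le_of_le_ofReal hε.le hCε.le
    have e2 : P.real (symmDiff (T ⁻¹' C) (T ⁻¹' A)) ≤ ε := by
      have : symmDiff (T ⁻¹' C) (T ⁻¹' A) = T ⁻¹' (symmDiff C A) := by
        simp [Set.symmDiff_def]
      rw [this, Measure.real, hmpn.measure_preimage (hCm.symmDiff hA).nullMeasurableSet]
      exact e1
    have e3 : P.real A = P.real (A ∩ T ⁻¹' A) := by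
      apply measureReal_congr
      have := (ae_eq_refl A).inter hAn
      rw [Set.inter_self] at this
      exact this.symm
    have e4 : |P.real (C ∩ T ⁻¹' C) - P.real (A ∩ T ⁻¹' A)| ≤ 2 * ε := by
      refine (abs_measureReal_sub_le_measureReal_symmDiff
        (hCm.inter (hmpn.measurable hCm)).nullMeasurableSet
        (hA.inter (hmpn.measurable hA)).nullMeasurableSet).trans ?_
      have : symmDiff (C ∩ T ⁻¹' C) (A ∩ T ⁻¹' A)
          ⊆ symmDiff C A ∪ symmDiff (T ⁻¹' C) (T ⁻¹' A) := by
        intro x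
        simp only [Set.mem_symmDiff, Set.mem_inter_iff, Set.mem_union]
        tauto
      refine (measureReal_mono this).trans ((measureReal_union_le _ _).trans ?_)
      linarith
    have e5 : |P.real C - P.real A| ≤ ε :=
      (abs_measureReal_sub_le_measureReal_symmDiff hCm.nullMeasurableSet hA.nullMeasurableSet).trans e1
    have a1 : P.real A ≤ 1 := measureReal_le_one
    have a2 : P.real C ≤ 1 := measureReal_le_one
    have a3 : 0 ≤ P.real A := measureReal_nonneg
    have a4 : 0 ≤ P.real C := measureReal_nonneg
    rw [hind, ← e3] at e4
    rw [abs_le] at e4 e5 ⊢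
    constructor <;> nlinarith
  have h0 : P.real A - P.real A * P.real A = 0 := by
    by_contra hne
    have := key (|P.real A - P.real A * P.real A| / 8) (by positivity)
    have h' : 0 < |P.real A - P.real A * P.real A| := by positivity
    linarith
  have h1 : P.real A * (1 - P.real A) = 0 := by linarith
  rcases mul_eq_zero.1 h1 with h | h
  · left
    rwa [measureReal_eq_zero_iff] at h
  · right
    have : P.real A = 1 := by linarith
    rw [Measure.real] at this
    exact (ENNReal.toReal_eq_one_iff _).1 this

end DaC

namespace DaC

lemma fkg_upper {F : Type*} [Fintype F] [DecidableEq F] (μ : Measure Bool) [IsProbabilityMeasure μ]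
    {A B : Set (F → Bool)} (hA : IsUpperSet A) (hB : IsUpperSet B) :
    (Measure.pi fun _ : F => μ).real A * (Measure.pi fun _ : F => μ).real B
      ≤ (Measure.pi fun _ : F => μ).real (A ∩ B) := by
  classical
  set ν := (Measure.pi fun _ : F => μ) with hν
  have hsing : ∀ x : F → Bool, ν.real {x} = ∏ i, μ.real {x i} := by
    intro x
    rw [Measure.real, hν, Measure.pi_singleton, ENNReal.toReal_prod]
    rfl
  have hsum : ∀ S : Set (F → Bool), ν.real S = ∑ x, ν.real {x} * (if x ∈ S then 1 else 0) := by
    intro S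
    have : (S.toFinset : Set (F → Bool)) = S := by simp
    rw [← this, ← sum_measureReal_singleton]
    simp only [mul_ite, mul_one, mul_zero, Finset.sum_ite]
    simp only [Finset.sum_const_zero, add_zero]
    apply Finset.sum_congr _ (fun _ _ => rfl)
    ext x; simp
  have hmono : ∀ S : Set (F → Bool), IsUpperSet S →
      Monotone (fun x => if x ∈ S then (1:ℝ) else 0) := by
    intro S hS x y hxy
    by_cases hx : x ∈ S
    · simp [hx, hS hxy hx]
    · simp only [hx, if_false]
      split_ifs <;> norm_num
  have := fkg (μ := fun x : F → Bool => ν.real {x}) (f := fun x => if x ∈ A then (1:ℝ) else 0)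
    (g := fun x => if x ∈ B then (1:ℝ) else 0) (fun _ => measureReal_nonneg)
    (fun x => by dsimp only [Pi.zero_apply]; split_ifs <;> norm_num) (fun x => by dsimp only [Pi.zero_apply]; split_ifs <;> norm_num)
    (hmono A hA) (hmono B hB) (by
      intro a b
      simp only [hsing, ← Finset.prod_mul_distrib]
      apply le_of_eq
      apply Finset.prod_congr rfl
      intro i _
      simp only [Pi.inf_apply, Pi.sup_apply]
      cases a i <;> cases b i <;> simp [mul_comm])
  rw [hsum A, hsum B, hsum (A ∩ B)]
  refine this.trans (le_of_eq ?_)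
  have h1 : ∑ x, ν.real {x} = 1 := by
    have := hsum Set.univ
    simp only [Set.mem_univ, if_true, mul_one] at this
    rw [← this]
    simp
  rw [h1, one_mul]
  apply Finset.sum_congr rfl
  intro x _
  by_cases h1 : x ∈ A <;> by_cases h2 : x ∈ B <;> simp [h1, h2]

/-- Decreasing event depending only on `F`. -/
def LocDec {I : Type*} (F : Finset I) (A : Set (I → Bool)) : Prop :=
  IsLowerSet A ∧ ∀ x y : I → Bool, (∀ i ∈ F, x i = y i) → x ∈ A → y ∈ A

lemma LocDec.mono {I : Type*} {F G : Finset I} {A : Set (I → Bool)} (h : LocDec F A)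
    (hFG : F ⊆ G) : LocDec G A := ⟨h.1, fun x y hxy => h.2 x y fun i hi => hxy i (hFG hi)⟩

lemma LocDec.inter {I : Type*} {F : Finset I} {A B : Set (I → Bool)} (h : LocDec F A)
    (h' : LocDec F B) : LocDec F (A ∩ B) :=
  ⟨h.1.inter h'.1, fun x y hxy hx => ⟨h.2 x y hxy hx.1, h'.2 x y hxy hx.2⟩⟩

lemma LocDec.repr {I : Type*} {F : Finset I} {A : Set (I → Bool)} (h : LocDec F A) :
    ∃ A' : Set (F → Bool), IsLowerSet A' ∧ A = F.restrict ⁻¹' A' := by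
  classical
  refine ⟨{z | (fun i => if hi : i ∈ F then z ⟨i, hi⟩ else false) ∈ A}, ?_, ?_⟩
  · intro z z' hz h'
    refine h.1 ?_ h'
    intro i
    by_cases hi : i ∈ F
    · simpa [hi] using hz ⟨i, hi⟩
    · simp [hi]
  · ext x
    constructor
    · intro hx
      exact h.2 _ _ (fun i hi => by simp [hi]) hx
    · intro hx
      exact h.2 _ _ (fun i hi => by simp [hi]) hx

lemma LocDec.measurableSet {I : Type*} {F : Finset I} {A : Set (I → Bool)} (h : LocDec F A) :
    MeasurableSet A := by
  obtain ⟨A', _, rfl⟩ := h.repr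
  exact (Finset.measurable_restrict F) (Set.Finite.measurableSet (Set.toFinite A'))

lemma LocDec.fkg {I : Type*} (μ : Measure Bool) [IsProbabilityMeasure μ] {F : Finset I}
    {A B : Set (I → Bool)} (h : LocDec F A) (h' : LocDec F B) :
    (Measure.infinitePi fun _ : I => μ).real A * (Measure.infinitePi fun _ : I => μ).real B
      ≤ (Measure.infinitePi fun _ : I => μ).real (A ∩ B) := by
  classical
  obtain ⟨A', hA, rfl⟩ := h.repr
  obtain ⟨B', hB, rfl⟩ := h'.repr
  have hm : ∀ S : Set (F → Bool), (Measure.infinitePi fun _ : I => μ).real (F.restrict ⁻¹' S)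
      = (Measure.pi fun _ : F => μ).real S := by
    intro S
    rw [Measure.real, Measure.real, ← Measure.infinitePi_map_restrict (fun _ : I => μ),
      Measure.map_apply (Finset.measurable_restrict F) (Set.Finite.measurableSet (Set.toFinite S))]
  rw [← Set.preimage_inter, hm, hm, hm]
  set ν := (Measure.pi fun _ : F => μ)
  have key := fkg_upper μ hA.compl hB.compl
  have mA : MeasurableSet A' := (Set.toFinite A').measurableSet
  have mB : MeasurableSet B' := (Set.toFinite B').measurableSet
  have e1 := probReal_compl_eq_one_sub (μ := ν) mA
  have e2 := probReal_compl_eq_one_sub (μ := ν) mB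
  have e3 := probReal_compl_eq_one_sub (μ := ν) (mA.inter mB)
  have e4 := measureReal_union_add_inter (μ := ν) (s := A'ᶜ) (t := B'ᶜ) mB.compl
  rw [← Set.compl_inter] at e4
  change ν.real A'ᶜ * ν.real B'ᶜ ≤ _ at key
  rw [e1, e2, e3] at e4
  rw [e1, e2] at key
  nlinarith

/-- Increasing limits of local decreasing events. -/
def DecEv {I : Type*} (A : Set (I → Bool)) : Prop :=
  ∃ (F : ℕ → Finset I) (s : ℕ → Set (I → Bool)), (∀ n, LocDec (F n) (s n)) ∧ Monotone s ∧
    A = ⋃ n, s n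

lemma DecEv.measurableSet {I : Type*} {A : Set (I → Bool)} (h : DecEv A) : MeasurableSet A := by
  obtain ⟨F, s, h1, h2, rfl⟩ := h
  exact MeasurableSet.iUnion fun n => (h1 n).measurableSet

lemma DecEv.inter_fkg {I : Type*} (μ : Measure Bool) [IsProbabilityMeasure μ]
    {A B : Set (I → Bool)} (hA : DecEv A) (hB : DecEv B) :
    DecEv (A ∩ B) ∧ (Measure.infinitePi fun _ : I => μ).real A *
      (Measure.infinitePi fun _ : I => μ).real B
      ≤ (Measure.infinitePi fun _ : I => μ).real (A ∩ B) := by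
  classical
  obtain ⟨F, s, h1, h2, rfl⟩ := hA
  obtain ⟨F', s', h1', h2', rfl⟩ := hB
  have hmono : Monotone fun n => s n ∩ s' n := fun a b hab =>
    Set.inter_subset_inter (h2 hab) (h2' hab)
  have hun : (⋃ n, s n) ∩ (⋃ n, s' n) = ⋃ n, s n ∩ s' n := by
    ext x
    simp only [Set.mem_inter_iff, Set.mem_iUnion]
    constructor
    · rintro ⟨⟨a, ha⟩, b, hb⟩
      exact ⟨max a b, h2 (le_max_left a b) ha, h2' (le_max_right a b) hb⟩
    · rintro ⟨a, ha, hb⟩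
      exact ⟨⟨a, ha⟩, a, hb⟩
  have hloc := fun n => ((h1 n).mono (Finset.subset_union_left (s₂ := F' n)))
  have hloc' := fun n => ((h1' n).mono (Finset.subset_union_right (s₁ := F n)))
  refine ⟨⟨fun n => F n ∪ F' n, fun n => s n ∩ s' n, fun n => (hloc n).inter (hloc' n),
    hmono, hun⟩, ?_⟩
  set P := (Measure.infinitePi fun _ : I => μ)
  have lim : ∀ t : ℕ → Set (I → Bool), Monotone t →
      Filter.Tendsto (fun n => P.real (t n)) Filter.atTop (nhds (P.real (⋃ n, t n))) := by
    intro t ht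
    exact (ENNReal.tendsto_toReal (measure_ne_top _ _)).comp (tendsto_measure_iUnion_atTop ht)
  rw [hun]
  exact le_of_tendsto_of_tendsto' ((lim s h2).mul (lim s' h2')) (lim _ hmono)
    fun n => LocDec.fkg μ (hloc n) (hloc' n)

lemma dec_prod {I ι : Type*} (μ : Measure Bool) [IsProbabilityMeasure μ] (T : Finset ι)
    {A : ι → Set (I → Bool)} (hA : ∀ i, DecEv (A i)) :
    DecEv (⋂ i ∈ T, A i) ∧ ∏ i ∈ T, (Measure.infinitePi fun _ : I => μ).real (A i)
      ≤ (Measure.infinitePi fun _ : I => μ).real (⋂ i ∈ T, A i) := by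
  classical
  induction T using Finset.induction_on with
  | empty =>
    refine ⟨⟨fun _ => ∅, fun _ => Set.univ, fun n => ⟨isLowerSet_univ, fun _ _ _ _ => trivial⟩,
      fun _ _ _ => le_rfl, ?_⟩, ?_⟩
    · simp [Set.iUnion_const]
    · simp
  | insert a T ha ih =>
    rw [Finset.prod_insert ha, Finset.set_biInter_insert]
    obtain ⟨h1, h2⟩ := DecEv.inter_fkg μ (hA a) ih.1
    exact ⟨h1, (mul_le_mul_of_nonneg_left ih.2 measureReal_nonneg).trans h2⟩

end DaC

namespace DaC

/-- Open edges of a configuration. -/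
def op (a : Ed → Bool) : Set Ed := {e | a e = true}

/-- Product measure on edge configurations. -/
noncomputable abbrev Pr (μ : Measure Bool) [IsProbabilityMeasure μ] : Measure (Ed → Bool) :=
  Measure.infinitePi (fun _ : Ed => μ)

lemma cn_iff_finset {O : Set Ed} {u v : V} :
    Cn O u v ↔ ∃ F : Finset Ed, (∀ e ∈ F, e ∈ O) ∧ Cn (F : Set Ed) u v := by
  classical
  constructor
  · intro h
    induction h with
    | refl => exact ⟨∅, by simp, Cn.refl _ _⟩
    | tail _ h ih =>
      obtain ⟨F, hF, h'⟩ := ih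
      obtain ⟨e, he, hE⟩ := h
      refine ⟨insert e F, ?_, ?_⟩
      · intro e' he'
        rcases Finset.mem_insert.1 he' with rfl | h
        · exact he
        · exact hF _ h
      · exact (h'.mono (by simp)).trans (Cn.step ⟨e, by simp, hE⟩)
  · rintro ⟨F, hF, h⟩
    exact h.mono hF

lemma measurable_op (e : Ed) : Measurable fun a : Ed → Bool => e ∈ op a := by
  rw [← measurableSet_setOf]
  exact measurableSet_eq_fun (measurable_pi_apply e) measurable_const

lemma measurable_cn (E : Set Ed) (u v : V) :
    Measurable fun a : Ed → Bool => Cn (op a \ E) u v := by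
  have : (fun a : Ed → Bool => Cn (op a \ E) u v)
      = fun a => ∃ F : Finset Ed, (∀ e ∈ F, e ∈ op a \ E) ∧ Cn (F : Set Ed) u v :=
    funext fun a => propext cn_iff_finset
  rw [this]
  refine Measurable.exists fun F => Measurable.and ?_ measurable_const
  refine Measurable.forall fun e => Measurable.imp measurable_const ?_
  exact (measurable_op e).and measurable_const

lemma infinite_iff_finset {s : Set V} : s.Infinite ↔ ∀ F : Finset V, ∃ w, w ∈ s ∧ w ∉ F := by
  constructor
  · intro h F
    exact h.exists_notMem_finset F
  · intro h hf
    obtain ⟨w, hw, hw'⟩ := h hf.toFinset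
    exact hw' (by simpa using hw)

lemma measurable_inf (E : Set Ed) (v : V) :
    Measurable fun a : Ed → Bool => (Comp (op a \ E) v).Infinite := by
  simp only [infinite_iff_finset]
  refine Measurable.forall fun F => Measurable.exists fun w => Measurable.and ?_ measurable_const
  exact measurable_cn E v w

lemma measurable_cn0 (u v : V) :
    Measurable fun a : Ed → Bool => Cn (op a) u v := by
  simpa using measurable_cn ∅ u v

lemma measurable_inf0 (v : V) :
    Measurable fun a : Ed → Bool => (Comp (op a) v).Infinite := by
  simpa using measurable_inf ∅ v

lemma Lam_finite (n : ℤ) : (Lam n).Finite := by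
  refine ((Set.finite_Icc (1 - n) n).prod (Set.finite_Icc (1 - n) n)).subset ?_
  rintro ⟨i, j⟩ ⟨h1, h2, h3, h4⟩
  exact ⟨⟨h1, h2⟩, h3, h4⟩

lemma Dbox_finite (n : ℤ) : (Dbox n).Finite := by
  refine ((Set.finite_Icc (-n) n).prod (Set.finite_Icc (-n) n)).subset ?_
  rintro ⟨i, j⟩ ⟨h1, h2, h3, h4⟩
  exact ⟨⟨h1, h2⟩, h3, h4⟩

lemma Eplus_finite (n : ℤ) : (Eplus n).Finite := by
  refine ((((Set.finite_Icc (-n) n).prod (Set.finite_Icc (-n) n))).prod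
    (Set.finite_univ (α := Bool))).subset ?_
  rintro ⟨⟨i, j⟩, b⟩ h
  cases b <;> simp [Eplus, Lam] at h <;> simp <;> omega

lemma Lam_mono {n m : ℤ} (h : n ≤ m) : Lam n ⊆ Lam m := by
  rintro ⟨i, j⟩ ⟨h1, h2, h3, h4⟩
  simp only at h1 h2 h3 h4
  refine ⟨?_, ?_, ?_, ?_⟩ <;> simp only <;> omega

lemma exists_Lam {s : Set V} (hs : s.Finite) : ∃ n : ℕ, s ⊆ Lam n := by
  induction s, hs using Set.Finite.induction_on with
  | empty => exact ⟨0, by simp⟩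
  | @insert a s _ _ ih =>
    obtain ⟨n, hn⟩ := ih
    refine ⟨n + (a.1.natAbs + a.2.natAbs + 1), ?_⟩
    rw [Set.insert_subset_iff]
    refine ⟨?_, hn.trans (Lam_mono (by omega))⟩
    refine ⟨?_, ?_, ?_, ?_⟩ <;> omega

lemma comp_subset_local {O O' : Set Ed} {n : ℤ} {v : V}
    (h : ∀ e ∈ Eplus n, e ∈ O' → e ∈ O) (hc : Comp O v ⊆ Lam n) : Comp O' v ⊆ Comp O v := by
  intro w hw
  induction hw with
  | refl => exact Cn.refl _ _
  | tail _ hs ih =>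
    obtain ⟨e, he, hE⟩ := hs
    have hb := hc ih
    refine Cn.trans ih (Cn.step ⟨e, h e ?_ he, hE⟩)
    rcases hE with ⟨h1, _⟩ | ⟨_, h1⟩
    · exact Or.inl (h1 ▸ hb)
    · exact Or.inr (h1 ▸ hb)

lemma armc_dec (E : Set Ed) {S : Set V} (hS : S.Finite) :
    DecEv {a : Ed → Bool | ¬ Arm E S (op a)} := by
  refine ⟨fun n => (Eplus_finite n).toFinset, fun n => {a | ∀ v ∈ S, Comp (op a \ E) v ⊆ Lam n},
    ?_, ?_, ?_⟩
  · intro n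
    refine ⟨?_, ?_⟩
    · intro a b hab ha v hv
      refine (Comp.mono ?_ v).trans (ha v hv)
      rintro e ⟨he, he'⟩
      refine ⟨?_, he'⟩
      have h1 := hab e
      have h2 : b e = true := he
      rw [h2] at h1
      exact top_le_iff.1 h1
    · intro x y hxy hx v hv
      refine (comp_subset_local (n := n) ?_ (hx v hv)).trans (hx v hv)
      rintro e he ⟨h1, h2⟩
      refine ⟨?_, h2⟩
      have := hxy e (by simpa using he)
      exact this.trans h1
  · intro n m hnm a ha v hv
    exact (ha v hv).trans (Lam_mono (by exact_mod_cast hnm))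
  · ext a
    simp only [Arm, Set.mem_ofPred_eq, not_exists, not_and, Set.mem_iUnion, Set.not_infinite]
    constructor
    · intro h
      obtain ⟨n, hn⟩ := exists_Lam (hS.biUnion h)
      exact ⟨n, fun v hv => (Set.subset_biUnion_of_mem (u := fun v => Comp (op a \ E) v) hv).trans hn⟩
    · rintro ⟨n, hn⟩ v hv
      exact (Lam_finite n).subset (hn v hv)

/-- Graph automorphisms. -/
structure GAut where
  φ : V ≃ V
  σ : Ed ≃ Ed
  h : ∀ e u v, Ends (σ e) (φ u) (φ v) ↔ Ends e u v

lemma GAut.cn (g : GAut) {O : Set Ed} {u v : V} : Cn O (g.φ u) (g.φ v) ↔ Cn (g.σ ⁻¹' O) u v := by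
  constructor
  · intro h
    have : ∀ w, Cn O (g.φ u) w → Cn (g.σ ⁻¹' O) u (g.φ.symm w) := by
      intro w hw
      induction hw with
      | refl => simpa using Cn.refl _ _
      | @tail b c _ hs ih =>
        obtain ⟨e, he, hE⟩ := hs
        refine Cn.trans ih (Cn.step ⟨g.σ.symm e, by simpa using he, ?_⟩)
        rw [← g.h]
        simpa using hE
    simpa using this _ h
  · intro h
    induction h with
    | refl => exact Cn.refl _ _
    | tail _ hs ih =>
      obtain ⟨e, he, hE⟩ := hs
      exact Cn.trans ih (Cn.step ⟨g.σ e, he, (g.h _ _ _).2 hE⟩)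

lemma GAut.comp (g : GAut) (O : Set Ed) (v : V) :
    Comp O (g.φ v) = g.φ '' Comp (g.σ ⁻¹' O) v := by
  ext w
  constructor
  · intro h
    refine ⟨g.φ.symm w, ?_, by simp⟩
    refine g.cn.1 ?_
    rw [Equiv.apply_symm_apply]
    exact h
  · rintro ⟨w, h, rfl⟩
    exact g.cn.2 h

lemma GAut.inf (g : GAut) (O : Set Ed) (v : V) :
    (Comp O (g.φ v)).Infinite ↔ (Comp (g.σ ⁻¹' O) v).Infinite := by
  rw [g.comp, Set.infinite_image_iff g.φ.injective.injOn]

lemma GAut.arm (g : GAut) {E E' : Set Ed} {S S' : Set V} (hE : ∀ e, g.σ e ∈ E' ↔ e ∈ E)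
    (hS : ∀ v, g.φ v ∈ S' ↔ v ∈ S) (O : Set Ed) :
    Arm E' S' O ↔ Arm E S (g.σ ⁻¹' O) := by
  have hpre : g.σ ⁻¹' O \ E = g.σ ⁻¹' (O \ E') := by
    ext e; simp [hE]
  unfold Arm
  rw [hpre]
  constructor
  · rintro ⟨v, hv, hi⟩
    refine ⟨g.φ.symm v, (hS _).1 (by simpa using hv), ?_⟩
    rw [← g.inf]
    simpa using hi
  · rintro ⟨v, hv, hi⟩
    exact ⟨g.φ v, (hS v).2 hv, (g.inf _ _).2 hi⟩

lemma GAut.prob (g : GAut) (μ : Measure Bool) [IsProbabilityMeasure μ] {E : Set Ed} {S S' : Set V}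
    (hfin : S.Finite) (hE : ∀ e, g.σ e ∈ E ↔ e ∈ E)
    (hS : ∀ v, g.φ v ∈ S' ↔ v ∈ S) :
    (Pr μ).real {a | ¬ Arm E S' (op a)} = (Pr μ).real {a | ¬ Arm E S (op a)} := by
  have hmp := perm_mp (fun _ : Ed => μ) g.σ.injective (fun _ => rfl)
  have : {a : Ed → Bool | ¬ Arm E S' (op a)}
      = (fun (x : Ed → Bool) i => x (g.σ i)) ⁻¹' {a | ¬ Arm E S (op a)} := by
    ext a
    simp only [Set.mem_ofPred_eq, Set.mem_preimage]
    rw [g.arm hE hS]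
    rfl
  rw [this, Measure.real, Measure.real,
    hmp.measure_preimage (armc_dec E hfin).measurableSet.nullMeasurableSet]

/-- Reflection in the first coordinate. -/
def refX (c : ℤ) : GAut where
  φ := ⟨fun v => (c - v.1, v.2), fun v => (c - v.1, v.2), fun v => by simp, fun v => by simp⟩
  σ := ⟨fun e => if e.2 then ((c - e.1.1, e.1.2), true) else ((c - e.1.1 - 1, e.1.2), false),
        fun e => if e.2 then ((c - e.1.1, e.1.2), true) else ((c - e.1.1 - 1, e.1.2), false),
        fun ⟨⟨i, j⟩, b⟩ => by cases b <;> simp <;> omega, fun ⟨⟨i, j⟩, b⟩ => by cases b <;> simp <;> omega⟩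
  h := by
    rintro ⟨⟨i, j⟩, b⟩ ⟨x, y⟩ ⟨z, w⟩
    cases b <;> simp [Ends] <;> omega

/-- Coordinate swap. -/
def swapG : GAut where
  φ := ⟨fun v => (v.2, v.1), fun v => (v.2, v.1), fun v => by simp, fun v => by simp⟩
  σ := ⟨fun e => ((e.1.2, e.1.1), !e.2), fun e => ((e.1.2, e.1.1), !e.2),
    fun e => by simp, fun e => by simp⟩
  h := by
    rintro ⟨⟨i, j⟩, b⟩ ⟨x, y⟩ ⟨z, w⟩
    cases b <;> simp [Ends] <;> omega

/-- Translation. -/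
def transG (t : V) : GAut where
  φ := Equiv.addRight t
  σ := ⟨fun e => (e.1 + t, e.2), fun e => (e.1 - t, e.2), fun e => by simp, fun e => by simp⟩
  h := by
    obtain ⟨p, q⟩ := t
    rintro ⟨⟨i, j⟩, b⟩ ⟨x, y⟩ ⟨z, w⟩
    cases b <;> simp [Ends] <;> omega

end DaC

namespace DaC

/-- Reflection in the second coordinate. -/
def refY (c : ℤ) : GAut where
  φ := ⟨fun v => (v.1, c - v.2), fun v => (v.1, c - v.2), fun v => by simp, fun v => by simp⟩
  σ := ⟨fun e => if e.2 then ((e.1.1, c - e.1.2 - 1), true) else ((e.1.1, c - e.1.2), false),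
        fun e => if e.2 then ((e.1.1, c - e.1.2 - 1), true) else ((e.1.1, c - e.1.2), false),
        fun ⟨⟨i, j⟩, b⟩ => by cases b <;> simp <;> omega,
        fun ⟨⟨i, j⟩, b⟩ => by cases b <;> simp <;> omega⟩
  h := by
    rintro ⟨⟨i, j⟩, b⟩ ⟨x, y⟩ ⟨z, w⟩
    cases b <;> simp [Ends] <;> omega

/-- The eight half sides. -/
def Seg (c n : ℤ) (k : Bool × Bool × Bool) : Set V := {v |
  let v' : V := if k.2.2 then (v.2, v.1) else v
  let y : ℤ := if k.2.1 then c - v'.2 else v'.2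
  let x : ℤ := if k.1 then c - v'.1 else v'.1
  c ≤ x ∧ x ≤ n ∧ y = n + c}

lemma Seg_finite (c n : ℤ) (k : Bool × Bool × Bool) : (Seg c n k).Finite := by
  refine ((Set.finite_Icc (-(|c| + |n|)) (|c| + |n|)).prod
    (Set.finite_Icc (-(|c| + |n|)) (|c| + |n|))).subset ?_
  have := le_abs_self c
  have := neg_abs_le c
  have := le_abs_self n
  have := neg_abs_le n
  obtain ⟨h, f, s⟩ := k
  rintro ⟨i, j⟩ hv
  cases h <;> cases f <;> cases s <;> simp [Seg] at hv <;> simp <;> omega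

/-- Symmetric edge sets. -/
structure SymE (c : ℤ) (E : Set Ed) : Prop where
  x : ∀ e, (refX c).σ e ∈ E ↔ e ∈ E
  y : ∀ e, (refY c).σ e ∈ E ↔ e ∈ E
  s : ∀ e, swapG.σ e ∈ E ↔ e ∈ E

lemma symE_Eplus (n : ℤ) : SymE 1 (Eplus n) := by
  constructor <;> rintro ⟨⟨i, j⟩, b⟩ <;> cases b <;>
    simp [refX, refY, swapG, Eplus, Lam] <;> omega

lemma symE_Ein (n : ℤ) : SymE 0 (Ein n) := by
  constructor <;> rintro ⟨⟨i, j⟩, b⟩ <;> cases b <;>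
    simp [refX, refY, swapG, Ein, Dbox] <;> omega

lemma seg_prob (μ : Measure Bool) [IsProbabilityMeasure μ] {c n : ℤ} {E : Set Ed} (hE : SymE c E)
    (k : Bool × Bool × Bool) :
    (Pr μ).real {a | ¬ Arm E (Seg c n k) (op a)}
      = (Pr μ).real {a | ¬ Arm E (Seg c n (false, false, false)) (op a)} := by
  have h1 : ∀ h f s, (Pr μ).real {a | ¬ Arm E (Seg c n (h, f, s)) (op a)}
      = (Pr μ).real {a | ¬ Arm E (Seg c n (h, f, false)) (op a)} := by
    intro h f s
    cases s
    · rfl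
    · symm
      apply swapG.prob μ (Seg_finite _ _ _) hE.s
      rintro ⟨i, j⟩
      simp [swapG, Seg]
  have h2 : ∀ h f, (Pr μ).real {a | ¬ Arm E (Seg c n (h, f, false)) (op a)}
      = (Pr μ).real {a | ¬ Arm E (Seg c n (h, false, false)) (op a)} := by
    intro h f
    cases f
    · rfl
    · symm
      apply (refY c).prob μ (Seg_finite _ _ _) hE.y
      rintro ⟨i, j⟩
      simp [refY, Seg]
  have h3 : ∀ h, (Pr μ).real {a | ¬ Arm E (Seg c n (h, false, false)) (op a)}
      = (Pr μ).real {a | ¬ Arm E (Seg c n (false, false, false)) (op a)} := by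
    intro h
    cases h
    · rfl
    · symm
      apply (refX c).prob μ (Seg_finite _ _ _) hE.x
      rintro ⟨i, j⟩
      simp [refX, Seg]
  obtain ⟨h, f, s⟩ := k
  rw [h1, h2, h3]

lemma comp_isolated {O E : Set Ed} {w : V} (h : ∀ e, src e = w ∨ tgt e = w → e ∈ E) :
    Comp (O \ E) w = {w} := by
  have : ∀ z, Cn (O \ E) w z → z = w := by
    intro z hz
    induction hz with
    | refl => rfl
    | tail _ hs ih =>
      subst ih
      obtain ⟨e, he, hE⟩ := hs
      exfalso
      apply he.2
      apply h
      rcases hE with h | h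
      · exact Or.inl h.1
      · exact Or.inr h.2
  ext z
  simp only [Set.mem_singleton_iff]
  exact ⟨fun h => this z h, fun h => h ▸ Cn.refl _ _⟩

lemma exists_inf_diff {O E : Set Ed} {B : Set V} (hBf : B.Finite)
    (hB : ∀ e ∈ E, src e ∈ B ∧ tgt e ∈ B) {v : V} (hv : v ∈ B) (hi : (Comp O v).Infinite) :
    ∃ w ∈ B, (Comp (O \ E) w).Infinite := by
  by_contra hcon
  push Not at hcon
  apply hi
  refine (hBf.biUnion (t := fun w => Comp (O \ E) w) ?_).subset ?_
  · intro w hw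
    exact hcon w hw
  · intro w hw
    obtain ⟨y, hy, h⟩ := exists_cn_diff hB hv hw
    exact Set.mem_biUnion hy h

/-- vertices of edges touching the box -/
def Bplus (n : ℤ) : Set V := {v | (-n ≤ v.1 ∧ v.1 ≤ n + 1 ∧ 1 - n ≤ v.2 ∧ v.2 ≤ n) ∨
  (1 - n ≤ v.1 ∧ v.1 ≤ n ∧ -n ≤ v.2 ∧ v.2 ≤ n + 1)}

lemma Bplus_finite (n : ℤ) : (Bplus n).Finite := by
  refine ((Set.finite_Icc (-n) (n + 1)).prod (Set.finite_Icc (-n) (n + 1))).subset ?_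
  rintro ⟨i, j⟩ hv
  simp [Bplus] at hv
  simp
  omega

lemma Eplus_Bplus {n : ℤ} {e : Ed} (h : e ∈ Eplus n) : src e ∈ Bplus n ∧ tgt e ∈ Bplus n := by
  obtain ⟨⟨i, j⟩, b⟩ := e
  cases b <;> simp [Eplus, Lam] at h <;> simp [Bplus] <;> omega

lemma cover_plus {n : ℤ} {O : Set Ed} (h : ∃ v ∈ Lam n, (Comp O v).Infinite) :
    ∃ k, Arm (Eplus n) (Seg 1 n k) O := by
  obtain ⟨v, hv, hi⟩ := h
  obtain ⟨⟨i, j⟩, hw, hi⟩ := exists_inf_diff (Bplus_finite n) (fun e he => Eplus_Bplus he)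
    (v := v) (by
      obtain ⟨i, j⟩ := v
      simp [Lam] at hv; simp [Bplus]; omega) hi
  have hL : (i, j) ∉ Lam n := by
    intro hL
    rw [comp_isolated] at hi
    · exact hi (Set.finite_singleton _)
    · rintro e (h | h)
      · exact Or.inl (h ▸ hL)
      · exact Or.inr (h ▸ hL)
  simp only [Bplus, Lam, Set.mem_ofPred_eq] at hw hL
  have : ∃ k, (i, j) ∈ Seg 1 n k := by
    by_cases h1 : i = n + 1
    · by_cases h2 : 1 ≤ j
      · exact ⟨(false, false, true), by simp [Seg]; omega⟩
      · exact ⟨(true, false, true), by simp [Seg]; omega⟩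
    · by_cases h1' : i = -n
      · by_cases h2 : 1 ≤ j
        · exact ⟨(false, true, true), by simp [Seg]; omega⟩
        · exact ⟨(true, true, true), by simp [Seg]; omega⟩
      · by_cases h3 : j = n + 1
        · by_cases h2 : 1 ≤ i
          · exact ⟨(false, false, false), by simp [Seg]; omega⟩
          · exact ⟨(true, false, false), by simp [Seg]; omega⟩
        · by_cases h2 : 1 ≤ i
          · exact ⟨(false, true, false), by simp [Seg]; omega⟩
          · exact ⟨(true, true, false), by simp [Seg]; omega⟩
  obtain ⟨k, hk⟩ := this
  exact ⟨k, _, hk, hi⟩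

lemma cover_in {n : ℤ} {O : Set Ed} (h : ∃ v ∈ Lam n, (Comp O v).Infinite) :
    ∃ k, Arm (Ein n) (Seg 0 n k) O := by
  obtain ⟨v, hv, hi⟩ := h
  obtain ⟨⟨i, j⟩, hw, hi⟩ := exists_inf_diff (Dbox_finite n) (E := Ein n) (fun e he => he)
    (v := v) (by
      obtain ⟨i, j⟩ := v
      simp [Lam] at hv; simp [Dbox]; omega) hi
  simp only [Dbox, Set.mem_ofPred_eq] at hw
  have hL : i = n ∨ i = -n ∨ j = n ∨ j = -n := by
    by_contra hL
    rw [comp_isolated] at hi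
    · exact hi (Set.finite_singleton _)
    · rintro ⟨⟨x, y⟩, b⟩ h
      cases b <;> simp at h <;> simp [Ein, Dbox] <;> omega
  have : ∃ k, (i, j) ∈ Seg 0 n k := by
    by_cases h1 : i = n
    · by_cases h2 : 0 ≤ j
      · exact ⟨(false, false, true), by simp [Seg]; omega⟩
      · exact ⟨(true, false, true), by simp [Seg]; omega⟩
    · by_cases h1' : i = -n
      · by_cases h2 : 0 ≤ j
        · exact ⟨(false, true, true), by simp [Seg]; omega⟩
        · exact ⟨(true, true, true), by simp [Seg]; omega⟩
      · by_cases h3 : j = n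
        · by_cases h2 : 0 ≤ i
          · exact ⟨(false, false, false), by simp [Seg]; omega⟩
          · exact ⟨(true, false, false), by simp [Seg]; omega⟩
        · by_cases h2 : 0 ≤ i
          · exact ⟨(false, true, false), by simp [Seg]; omega⟩
          · exact ⟨(true, true, false), by simp [Seg]; omega⟩
  obtain ⟨k, hk⟩ := this
  exact ⟨k, _, hk, hi⟩

lemma square_root (μ : Measure Bool) [IsProbabilityMeasure μ] {c n : ℤ} {E : Set Ed}
    (hE : SymE c E)
    (hcov : ∀ O : Set Ed, (∃ v ∈ Lam n, (Comp O v).Infinite) → ∃ k, Arm E (Seg c n k) O)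
    (k : Bool × Bool × Bool) :
    ((Pr μ).real {a | ¬ Arm E (Seg c n k) (op a)}) ^ 8
      ≤ (Pr μ).real {a | ¬ ∃ v ∈ Lam n, (Comp (op a) v).Infinite} := by
  have h1 := (dec_prod μ Finset.univ
    (A := fun k => {a : Ed → Bool | ¬ Arm E (Seg c n k) (op a)})
    (fun k => armc_dec E (Seg_finite c n k))).2
  have h2 : ∏ k : Bool × Bool × Bool, (Pr μ).real {a | ¬ Arm E (Seg c n k) (op a)}
      = ((Pr μ).real {a | ¬ Arm E (Seg c n k) (op a)}) ^ 8 := by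
    rw [seg_prob μ hE k, Finset.prod_congr rfl (fun k _ => seg_prob μ hE k)]
    simp
  rw [← h2]
  refine h1.trans (measureReal_mono ?_)
  intro a ha hcon
  obtain ⟨k, hk⟩ := hcov _ hcon
  simp only [Set.mem_iInter] at ha
  exact ha k (Finset.mem_univ k) hk

theorem arm_lim (μ : Measure Bool) [IsProbabilityMeasure μ]
    (h : ∀ᵐ a ∂(Pr μ), ∃ v, (Comp (op a) v).Infinite) {ε : ℝ} (hε : 0 < ε) :
    ∃ N : ℕ, ∀ n : ℕ, N ≤ n → ∀ k,
      (Pr μ).real {a | ¬ Arm (Eplus n) (Seg 1 n k) (op a)} < ε ∧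
      (Pr μ).real {a | ¬ Arm (Ein n) (Seg 0 n k) (op a)} < ε := by
  let s : ℕ → Set (Ed → Bool) := fun n => {a | ¬ ∃ v ∈ Lam n, (Comp (op a) v).Infinite}
  have hanti : Antitone s := by
    intro n m hnm a ha ⟨v, hv, hi⟩
    exact ha ⟨v, Lam_mono (by exact_mod_cast hnm) hv, hi⟩
  have hmeas : ∀ n, MeasurableSet (s n) := by
    intro n
    refine MeasurableSet.compl (measurableSet_setOf.2 ?_)
    exact Measurable.exists fun v => measurable_const.and (measurable_inf0 v)
  have hlim := tendsto_measure_iInter_atTop (μ := Pr μ) (fun n => (hmeas n).nullMeasurableSet) hanti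
    ⟨0, measure_ne_top _ _⟩
  have h0 : Pr μ (⋂ n, s n) = 0 := by
    rw [← nonpos_iff_eq_zero, ← ae_iff.1 h]
    apply measure_mono
    intro a ha ⟨v, hv⟩
    obtain ⟨n, hn⟩ := exists_Lam (Set.finite_singleton v)
    exact Set.mem_iInter.1 ha n ⟨v, hn rfl, hv⟩
  rw [h0] at hlim
  have hlim' := (ENNReal.tendsto_toReal ENNReal.zero_ne_top).comp hlim
  rw [ENNReal.toReal_zero] at hlim'
  obtain ⟨N, hN⟩ := Filter.eventually_atTop.1
    ((hlim'.eventually_lt_const (show (0:ℝ) < ε ^ 8 by positivity)))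
  refine ⟨N, fun n hn k => ⟨?_, ?_⟩⟩
  · refine lt_of_pow_lt_pow_left₀ 8 hε.le ?_
    exact (square_root μ (symE_Eplus n) (fun O => cover_plus) k).trans_lt (hN n hn)
  · refine lt_of_pow_lt_pow_left₀ 8 hε.le ?_
    exact (square_root μ (symE_Ein n) (fun O => cover_in) k).trans_lt (hN n hn)

end DaC

namespace DaC

lemma mix_of_height {I : Type*} {τ : I → I} (ht : I → ℤ) (h : ∀ i, ht (τ i) = ht i + 1)
    (F : Finset I) : ∃ n : ℕ, ∀ i ∈ F, τ^[n] i ∉ F := by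
  have hit : ∀ (n : ℕ) i, ht (τ^[n] i) = ht i + n := by
    intro n
    induction n with
    | zero => simp
    | succ n ih =>
      intro i
      rw [Function.iterate_succ_apply, ih, h]
      push_cast
      ring
  have hb : ∀ i ∈ F, (ht i).natAbs ≤ ∑ i ∈ F, (ht i).natAbs := fun i hi =>
    Finset.single_le_sum (f := fun i => (ht i).natAbs) (fun _ _ => Nat.zero_le _) hi
  refine ⟨2 * (∑ i ∈ F, (ht i).natAbs) + 1, fun i hi hi' => ?_⟩
  have h1 := hb i hi
  have h2 := hb _ hi'
  rw [hit] at h2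
  omega

lemma inf_zero_one (μ : Measure Bool) [IsProbabilityMeasure μ] :
    (∀ᵐ a ∂(Pr μ), ∀ v, (Comp (op a) v).Finite) ∨
      ∀ᵐ a ∂(Pr μ), ∃ v, (Comp (op a) v).Infinite := by
  have hm : MeasurableSet {a : Ed → Bool | ∃ v, (Comp (op a) v).Infinite} :=
    measurableSet_setOf.2 (Measurable.exists fun v => measurable_inf0 v)
  have := zero_one (fun _ : Ed => μ) (τ := (transG (1, 0)).σ) (transG (1, 0)).σ.injective
    (fun _ => rfl) (mix_of_height (fun e => e.1.1) (fun e => by simp [transG])) hm (by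
      apply Filter.EventuallyEq.of_eq
      ext a
      constructor
      · rintro ⟨v, hv⟩
        exact ⟨_, ((transG (1, 0)).inf (op a) v).2 hv⟩
      · rintro ⟨v, hv⟩
        refine ⟨(transG (1, 0)).φ.symm v, ((transG (1, 0)).inf (op a) _).1 ?_⟩
        rwa [Equiv.apply_symm_apply])
  rcases this with h | h
  · left
    rw [ae_iff]
    convert h using 2
    ext a
    show (¬ ∀ v, _) ↔ ∃ v, _
    rw [not_forall]
    rfl
  · right
    rw [ae_iff]
    exact (prob_compl_eq_zero_iff hm).2 h

lemma bool_measure_ext {μ μ' : Measure Bool} (h : ∀ b, μ {b} = μ' {b}) : μ = μ' :=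
  Measure.ext_of_singleton h

lemma bool_sum (μ : Measure Bool) [IsProbabilityMeasure μ] : μ {true} + μ {false} = 1 := by
  rw [← measure_union (by simp) (measurableSet_singleton _), ← measure_univ (μ := μ)]
  congr 1
  ext b; cases b <;> simp

lemma mono_inf (μ μ' : Measure Bool) [IsProbabilityMeasure μ] [IsProbabilityMeasure μ']
    (hle : μ {true} ≤ μ' {true}) (h : ∀ᵐ a ∂(Pr μ), ∃ v, (Comp (op a) v).Infinite) :
    ∀ᵐ a ∂(Pr μ'), ∃ v, (Comp (op a) v).Infinite := by
  let κ : Measure (Bool × Bool) := μ {true} • Measure.dirac (true, true) +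
    (μ' {true} - μ {true}) • Measure.dirac (false, true) + μ' {false} • Measure.dirac (false, false)
  have s1 := bool_sum μ
  have s2 := bool_sum μ'
  have hadd : μ {true} + (μ' {true} - μ {true}) = μ' {true} := add_tsub_cancel_of_le hle
  have hf : μ' {true} - μ {true} + μ' {false} = μ {false} := by
    have : μ {true} + (μ' {true} - μ {true} + μ' {false}) = μ {true} + μ {false} := by
      rw [← add_assoc, hadd, s1, s2]
    exact (ENNReal.add_right_inj (measure_ne_top _ _)).1 this
  have k1 : κ.map Prod.fst = μ := by
    apply bool_measure_ext
    intro b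
    rw [Measure.map_apply measurable_fst (measurableSet_singleton _)]
    cases b
    · simp [κ, hf]
    · simp [κ]
  have k2 : κ.map Prod.snd = μ' := by
    apply bool_measure_ext
    intro b
    rw [Measure.map_apply measurable_snd (measurableSet_singleton _)]
    cases b
    · simp [κ]
    · simp [κ, hadd]
  have : IsProbabilityMeasure κ := by
    constructor
    rw [← Set.preimage_univ (f := Prod.fst), ← Measure.map_apply measurable_fst MeasurableSet.univ,
      k1, measure_univ]
  have m1 : (Measure.infinitePi fun _ : Ed => κ).map (fun w e => (w e).1) = Pr μ := by
    rw [Measure.infinitePi_map_pi (μ := fun _ : Ed => κ) (f := fun _ => Prod.fst)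
      (fun _ => measurable_fst)]
    congr 1
    exact funext fun _ => k1
  have m2 : (Measure.infinitePi fun _ : Ed => κ).map (fun w e => (w e).2) = Pr μ' := by
    rw [Measure.infinitePi_map_pi (μ := fun _ : Ed => κ) (f := fun _ => Prod.snd)
      (fun _ => measurable_snd)]
    congr 1
    exact funext fun _ => k2
  have hall : ∀ᵐ w ∂(Measure.infinitePi fun _ : Ed => κ), ∀ e, w e ≠ (true, false) := by
    rw [ae_all_iff]
    intro e
    have hmp := measurePreserving_eval_infinitePi (fun _ : Ed => κ) e
    refine hmp.quasiMeasurePreserving.ae (p := fun z => z ≠ (true, false)) ?_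
    rw [ae_iff]
    simp [κ]
  have hm : MeasurableSet {a : Ed → Bool | ∃ v, (Comp (op a) v).Infinite} :=
    measurableSet_setOf.2 (Measurable.exists fun v => measurable_inf0 v)
  have hq1 : Measurable (fun (w : Ed → Bool × Bool) e => (w e).1) :=
    measurable_pi_lambda _ fun e => measurable_fst.comp (measurable_pi_apply e)
  have hq2 : Measurable (fun (w : Ed → Bool × Bool) e => (w e).2) :=
    measurable_pi_lambda _ fun e => measurable_snd.comp (measurable_pi_apply e)
  rw [← m1, ae_map_iff hq1.aemeasurable hm] at h
  rw [← m2, ae_map_iff hq2.aemeasurable hm]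
  filter_upwards [h, hall] with w hw hall
  obtain ⟨v, hv⟩ := hw
  refine ⟨v, hv.mono (Comp.mono ?_ v)⟩
  intro e he
  have h1 : (w e).1 = true := he
  show (w e).2 = true
  have h2 := hall e
  rcases hwe : w e with ⟨x, y⟩
  rw [hwe] at h1 h2
  simp only at h1
  subst h1
  cases y
  · exact absurd rfl h2
  · rfl

lemma cross_inj : Function.Injective cross := by
  rintro ⟨⟨i, j⟩, b⟩ ⟨⟨i', j'⟩, b'⟩ h
  cases b <;> cases b' <;> simp at h <;> simp [h]

lemma dual_mp (μ : Measure Bool) [IsProbabilityMeasure μ] :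
    have : IsProbabilityMeasure (μ.map not) :=
      Measure.isProbabilityMeasure_map (measurable_of_finite _).aemeasurable
    MeasurePreserving (fun (a : Ed → Bool) e => !a (cross e)) (Pr μ) (Pr (μ.map not)) := by
  intro this
  have hnot : Measurable not := measurable_of_finite _
  have e1 : (Pr μ).map (fun a e => a (cross e)) = Pr μ :=
    Measure.map_infinitePi_infinitePi_of_inj (P := fun _ => μ) cross_inj
  have e2 : (Pr μ).map (fun a e => !a e) = Pr (μ.map not) :=
    Measure.infinitePi_map_pi (μ := fun _ : Ed => μ) (f := fun _ => not) (fun _ => hnot)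
  have hm2 : Measurable (fun (a : Ed → Bool) e => !a e) :=
    measurable_pi_lambda _ fun e => hnot.comp (measurable_pi_apply e)
  refine ⟨?_, ?_⟩
  · exact measurable_pi_lambda _ fun e => hnot.comp (measurable_pi_apply _)
  · rw [← e2, ← e1, Measure.map_map hm2 (by fun_prop), e1]
    rfl

lemma measurable_tri (n : ℤ) : MeasurableSet {a : Ed → Bool | Tri n (op a)} := by
  refine measurableSet_setOf.2 ?_
  unfold Tri
  refine Measurable.exists fun x => measurable_const.and (Measurable.and ?_ ?_)
  · exact Measurable.forall fun i => measurable_inf _ _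
  · exact Measurable.forall fun i => Measurable.forall fun j =>
      measurable_const.imp (measurable_cn _ _ _).not

lemma tri_pos (μ : Measure Bool) [IsProbabilityMeasure μ] (hμ : μ {true} ≤ μ {false})
    (h : ∀ᵐ a ∂(Pr μ), ∃ v, (Comp (op a) v).Infinite) :
    ∃ n : ℕ, 1 ≤ n ∧ Pr μ {a | Tri n (op a)} ≠ 0 := by
  have hpm : IsProbabilityMeasure (μ.map not) :=
      Measure.isProbabilityMeasure_map (measurable_of_finite _).aemeasurable
  have hd := dual_mp μ
  have h' : ∀ᵐ a ∂(Pr (μ.map not)), ∃ v, (Comp (op a) v).Infinite := by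
    refine mono_inf μ _ ?_ h
    rw [Measure.map_apply (measurable_of_finite _) (measurableSet_singleton _)]
    convert hμ using 2
    ext b; cases b <;> simp
  obtain ⟨N, hN⟩ := arm_lim μ h (ε := 1 / 8) (by norm_num)
  obtain ⟨N', hN'⟩ := arm_lim (μ.map not) h' (ε := 1 / 8) (by norm_num)
  let n : ℕ := max (max N N') 1
  have hn1 : 1 ≤ n := le_max_right _ _
  have hnN : N ≤ n := (le_max_left _ _).trans (le_max_left _ _)
  have hnN' : N' ≤ n := (le_max_right _ _).trans (le_max_left _ _)
  refine ⟨n, hn1, fun h0 => ?_⟩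
  let A : (Bool × Bool × Bool) → Set (Ed → Bool) := fun k =>
    {a | ¬ Arm (Eplus n) (Seg 1 n k) (op a)}
  let B : (Bool × Bool × Bool) → Set (Ed → Bool) := fun k =>
    {a | ¬ Arm (Ein n) (Seg 0 n k) (dualCfg (op a))}
  have hA : ∀ k, (Pr μ).real (A k) < 1 / 8 := fun k => (hN n hnN k).1
  have hB : ∀ k, (Pr μ).real (B k) < 1 / 8 := by
    intro k
    refine lt_of_eq_of_lt ?_ (hN' n hnN' k).2
    rw [Measure.real, Measure.real, ← hd.measure_preimage
      (armc_dec _ (Seg_finite 0 n k)).measurableSet.nullMeasurableSet]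
    have : B k = (fun (a : Ed → Bool) e => !a (cross e)) ⁻¹'
        {a | ¬ Arm (Ein n) (Seg 0 n k) (op a)} := by
      ext a
      have : dualCfg (op a) = op (fun e => !a (cross e)) := by
        ext e; simp [dualCfg, op]
      simp only [B, Set.mem_preimage, Set.mem_ofPred_eq, this]
    rw [this]
  have hsub : (Set.univ : Set (Ed → Bool)) ⊆ {a | Tri n (op a)} ∪
      (A (false, false, false) ∪ (A (true, false, true) ∪ (A (true, true, false) ∪
      (B (true, false, false) ∪ (B (false, false, true) ∪ B (false, true, false)))))) := by
    intro a _
    by_contra hcon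
    simp only [A, B, Set.mem_union, Set.mem_ofPred_eq, not_or, not_not] at hcon
    obtain ⟨hT, p1, p2, p3, d1, d2, d3⟩ := hcon
    apply hT
    have e1 : Seg 1 n (false, false, false) = PT2 n := by
      ext ⟨i, j⟩; simp [Seg, PT2]
    have e2 : Seg 1 n (true, false, true) = PR2 n := by
      ext ⟨i, j⟩; simp [Seg, PR2]; omega
    have e3 : Seg 1 n (true, true, false) = PB2 n := by
      ext ⟨i, j⟩; simp [Seg, PB2]; omega
    have e4 : Seg 0 n (true, false, false) = DT1 n := by
      ext ⟨i, j⟩; simp [Seg, DT1]; omega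
    have e5 : Seg 0 n (false, false, true) = DR1 n := by
      ext ⟨i, j⟩; simp [Seg, DR1]; omega
    have e6 : Seg 0 n (false, true, false) = DB1 n := by
      ext ⟨i, j⟩; simp [Seg, DB1]; omega
    rw [e1] at p1
    rw [e2] at p2
    rw [e3] at p3
    rw [e4] at d1
    rw [e5] at d2
    rw [e6] at d3
    exact tri_of_arms (by exact_mod_cast hn1) p1 p2 p3 d1 d2 d3
  have hle := measureReal_mono (μ := Pr μ) hsub
  have hT0 : (Pr μ).real {a | Tri n (op a)} = 0 := by
    rw [Measure.real, h0]; rfl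
  have u1 : (Pr μ).real Set.univ = 1 := by simp
  have b1 := measureReal_union_le (μ := Pr μ) {a | Tri n (op a)}
    (A (false, false, false) ∪ (A (true, false, true) ∪ (A (true, true, false) ∪
      (B (true, false, false) ∪ (B (false, false, true) ∪ B (false, true, false))))))
  have b2 := measureReal_union_le (μ := Pr μ)
    (A (false, false, false)) (A (true, false, true) ∪ (A (true, true, false) ∪
      (B (true, false, false) ∪ (B (false, false, true) ∪ B (false, true, false)))))
  have b3 := measureReal_union_le (μ := Pr μ)
    (A (true, false, true)) (A (true, true, false) ∪
      (B (true, false, false) ∪ (B (false, false, true) ∪ B (false, true, false))))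
  have b4 := measureReal_union_le (μ := Pr μ) (A (true, true, false))
      (B (true, false, false) ∪ (B (false, false, true) ∪ B (false, true, false)))
  have b5 := measureReal_union_le (μ := Pr μ)
      (B (true, false, false)) (B (false, false, true) ∪ B (false, true, false))
  have b6 := measureReal_union_le (μ := Pr μ) (B (false, false, true)) (B (false, true, false))
  have := hA (false, false, false)
  have := hA (true, false, true)
  have := hA (true, true, false)
  have := hB (true, false, false)
  have := hB (false, false, true)
  have := hB (false, true, false)
  linarith

end DaC

namespace DaC

lemma open_fin (μ : Measure Bool) [IsProbabilityMeasure μ] (ht : μ {true} ≠ 0)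
    {A : Set (Ed → Bool)} (hAm : MeasurableSet A) (F : Finset Ed)
    (hA : ∀ a b : Ed → Bool, (∀ e, e ∉ F → a e = b e) → a ∈ A → b ∈ A) (h0 : Pr μ A ≠ 0) :
    Pr μ (A ∩ {a | ∀ e ∈ F, a e = true}) ≠ 0 := by
  classical
  let m : Ed → MeasurableSpace (Ed → Bool) := fun e =>
    MeasurableSpace.comap (fun a => a e) inferInstance
  have hle : ∀ e, m e ≤ MeasurableSpace.pi := fun e => (measurable_pi_apply e).comap_le
  have hind : ProbabilityTheory.iIndep m (Pr μ) := by
    have := ProbabilityTheory.iIndepFun_infinitePi (P := fun _ : Ed => μ) (X := fun _ b => b)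
      (fun _ => measurable_id)
    exact this
  have hI := ProbabilityTheory.indep_iSup_of_disjoint hle hind
    (S := {e | e ∉ F}) (T := {e | e ∈ F}) (by
      rw [Set.disjoint_left]; intro e h1 h2; exact h1 h2)
  rw [ProbabilityTheory.Indep_iff] at hI
  have hset : {a : Ed → Bool | ∀ e ∈ F, a e = true} = ⋂ e ∈ F, (fun a => a e) ⁻¹' {true} := by
    ext a; simp
  have hm2 : MeasurableSet[⨆ i ∈ {e | e ∈ F}, m i] {a : Ed → Bool | ∀ e ∈ F, a e = true} := by
    rw [hset]
    refine Finset.measurableSet_biInter F fun e he => ?_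
    have : m e ≤ ⨆ i ∈ {e | e ∈ F}, m i := le_iSup₂ (f := fun i (_ : i ∈ {e | e ∈ F}) => m i) e he
    exact this _ ⟨{true}, measurableSet_singleton _, rfl⟩
  have hm1 : MeasurableSet[⨆ i ∈ {e | e ∉ F}, m i] A := by
    let g : (Ed → Bool) → (Ed → Bool) := fun a e => if e ∈ F then true else a e
    have hg : A = g ⁻¹' A := by
      ext a
      constructor
      · exact hA _ _ fun e he => by simp [g, he]
      · exact hA _ _ fun e he => by simp [g, he]
    have hgm : @Measurable _ _ (⨆ i ∈ {e | e ∉ F}, m i) MeasurableSpace.pi g := by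
      refine @measurable_pi_lambda _ _ _ (_) _ _ fun e => ?_
      by_cases he : e ∈ F
      · simp only [g, he, if_true]
        exact @measurable_const _ _ _ (_) _
      · simp only [g, he, if_false]
        have : m e ≤ ⨆ i ∈ {e | e ∉ F}, m i :=
          le_iSup₂ (f := fun i (_ : i ∈ {e | e ∉ F}) => m i) e he
        exact (comap_measurable (fun a : Ed → Bool => a e)).mono this le_rfl
    rw [hg]
    exact hgm hAm
  rw [hI _ _ hm1 hm2]
  refine mul_ne_zero h0 ?_
  have : {a : Ed → Bool | ∀ e ∈ F, a e = true} = Set.pi F fun _ => {true} := by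
    ext a; simp [Set.pi]
  rw [this, Pr, Measure.infinitePi_pi _ (fun _ _ => measurableSet_singleton _)]
  exact Finset.prod_ne_zero_iff.2 fun _ _ => ht

lemma Outer_Bplus {n : ℤ} {v : V} (h : v ∈ Outer n) : v ∈ Bplus n := by
  obtain ⟨i, j⟩ := v
  simp [Outer, PT2, PR2, PB2] at h
  simp [Bplus]
  omega

lemma Bplus_conn {n : ℤ} (hn : 1 ≤ n) {u v : V} (hu : u ∈ Bplus n) (hv : v ∈ Bplus n) :
    Cn (Eplus n) u v := by
  have key : ∀ u ∈ Bplus n, ∃ w ∈ Lam n, Cn (Eplus n) u w := by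
    rintro ⟨i, j⟩ hu
    simp only [Bplus, Set.mem_ofPred_eq] at hu
    by_cases h : (i, j) ∈ Lam n
    · exact ⟨_, h, Cn.refl _ _⟩
    simp only [Lam, Set.mem_ofPred_eq] at h
    have : i = -n ∨ i = n + 1 ∨ j = -n ∨ j = n + 1 := by omega
    rcases this with rfl | rfl | rfl | rfl
    · refine ⟨(-n + 1, j), by simp [Lam]; omega, Cn.step ⟨((-n, j), false), ?_, ?_⟩⟩
      · simp [Eplus, Lam]; omega
      · simp [Ends]
    · refine ⟨(n, j), by simp [Lam]; omega, Cn.step ⟨((n, j), false), ?_, ?_⟩⟩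
      · simp [Eplus, Lam]; omega
      · simp [Ends]
    · refine ⟨(i, -n + 1), by simp [Lam]; omega, Cn.step ⟨((i, -n), true), ?_, ?_⟩⟩
      · simp [Eplus, Lam]; omega
      · simp [Ends]
    · refine ⟨(i, n), by simp [Lam]; omega, Cn.step ⟨((i, n), true), ?_, ?_⟩⟩
      · simp [Eplus, Lam]; omega
      · simp [Ends]
  obtain ⟨w, hw, h1⟩ := key u hu
  obtain ⟨w', hw', h2⟩ := key v hv
  exact h1.trans (((conn_Lam hw hw').mono (fun e he => Or.inl he.1)).trans h2.symm)

/-- Boundary of the box. -/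
noncomputable def Sph (M : ℕ) : Finset V :=
  ((Finset.Icc (-(M : ℤ)) M).image fun i => ((i, (M : ℤ)) : V)) ∪
  ((Finset.Icc (-(M : ℤ)) M).image fun i => ((i, -(M : ℤ)) : V)) ∪
  (((Finset.Icc (-(M : ℤ)) M).image fun i => (((M : ℤ), i) : V)) ∪
  ((Finset.Icc (-(M : ℤ)) M).image fun i => ((-(M : ℤ), i) : V)))

lemma Sph_card (M : ℕ) : (Sph M).card ≤ 4 * (2 * M + 1) := by
  have hc : (Finset.Icc (-(M : ℤ)) M).card = 2 * M + 1 := by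
    rw [Int.card_Icc]; omega
  have hi : ∀ f : ℤ → V, ((Finset.Icc (-(M : ℤ)) M).image f).card ≤ 2 * M + 1 := fun f =>
    hc ▸ Finset.card_image_le
  unfold Sph
  refine (Finset.card_union_le _ _).trans ?_
  have h1 := (Finset.card_union_le ((Finset.Icc (-(M : ℤ)) M).image fun i => ((i, (M : ℤ)) : V))
    ((Finset.Icc (-(M : ℤ)) M).image fun i => ((i, -(M : ℤ)) : V)))
  have h2 := (Finset.card_union_le ((Finset.Icc (-(M : ℤ)) M).image fun i => (((M : ℤ), i) : V))
    ((Finset.Icc (-(M : ℤ)) M).image fun i => ((-(M : ℤ), i) : V)))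
  have := hi fun i => ((i, (M : ℤ)) : V)
  have := hi fun i => ((i, -(M : ℤ)) : V)
  have := hi fun i => (((M : ℤ), i) : V)
  have := hi fun i => ((-(M : ℤ), i) : V)
  omega

lemma mem_Sph {M : ℕ} {v : V} (h : v ∈ Dbox M)
    (h' : v.1 = M ∨ v.1 = -M ∨ v.2 = M ∨ v.2 = -M) : v ∈ Sph M := by
  obtain ⟨i, j⟩ := v
  simp only [Dbox, Set.mem_ofPred_eq] at h
  simp only [Sph, Finset.mem_union, Finset.mem_image, Finset.mem_Icc, Prod.mk.injEq]
  rcases h' with h' | h' | h' | h' <;> simp only at h'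
  · exact Or.inr (Or.inl ⟨j, ⟨h.2.2.1, h.2.2.2⟩, h'.symm, rfl⟩)
  · exact Or.inr (Or.inr ⟨j, ⟨h.2.2.1, h.2.2.2⟩, h'.symm, rfl⟩)
  · exact Or.inl (Or.inl ⟨i, ⟨h.1, h.2.1⟩, rfl, h'.symm⟩)
  · exact Or.inl (Or.inr ⟨i, ⟨h.1, h.2.1⟩, rfl, h'.symm⟩)

lemma hit_Sph {M : ℕ} {O : Set Ed} {v : V} (hv : v ∈ Dbox M) (hi : (Comp O v).Infinite) :
    ∃ s ∈ Sph M, Cn O v s := by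
  by_contra hcon
  push Not at hcon
  apply hi
  refine (Dbox_finite M).subset ?_
  intro w hw
  replace hw : Cn O v w := hw
  induction hw with
  | refl => exact hv
  | @tail b c hb hs ih =>
    by_contra hc
    refine hcon b ?_ hb
    refine mem_Sph ih ?_
    obtain ⟨⟨⟨i, j⟩, d⟩, _, hE⟩ := hs
    obtain ⟨b1, b2⟩ := b
    obtain ⟨c1, c2⟩ := c
    cases d <;> simp [Ends] at hE <;> simp [Dbox] at ih hc ⊢ <;> omega

lemma harris_card {n : ℕ} (hn : 1 ≤ n) (K : ℕ) (O : Set Ed) (T : Finset (ℕ × ℕ))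
    (hT : T ⊆ Finset.range K ×ˢ Finset.range K)
    (g : ℕ × ℕ → GAut)
    (hg : ∀ t, g t = transG ((2 * n + 2 : ℤ) * t.1, (2 * n + 2 : ℤ) * t.2))
    (h : ∀ t ∈ T, Tri n ((g t).σ ⁻¹' O) ∧ Eplus n ⊆ (g t).σ ⁻¹' O) :
    T.card ≤ 4 * (2 * ((2 * n + 2) * (K + 1)) + 1) := by
  refine le_trans ?_ (Sph_card _)
  set M := (2 * n + 2) * (K + 1) with hM
  have hx : ∀ t, ∃ x : Fin 3 → V, t ∈ T → (∀ i, x i ∈ Outer n) ∧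
      (∀ i, (Comp (((g t).σ ⁻¹' O) \ Eplus n) (x i)).Infinite) ∧
      ∀ i j, i ≠ j → ¬ Cn (((g t).σ ⁻¹' O) \ Eplus n) (x i) (x j) := by
    intro t
    by_cases ht : t ∈ T
    · obtain ⟨x, hx⟩ := (h t ht).1
      exact ⟨x, fun _ => hx⟩
    · exact ⟨fun _ => 0, fun h => absurd h ht⟩
  choose x hx using hx
  have hpre : ∀ t, (g t).σ ⁻¹' (O \ ((g t).σ.symm ⁻¹' Eplus n)) = ((g t).σ ⁻¹' O) \ Eplus n := by
    intro t
    ext e; simp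
  refine burton_keane O (Sph M) T (fun t => (g t).σ.symm ⁻¹' Eplus n)
    (fun t => (g t).φ '' Bplus n) (fun t i => (g t).φ (x t i)) ?_ ?_ ?_ ?_ ?_ ?_ ?_
  · intro t ht e he
    have := (h t ht).2 he
    simpa using this
  · intro t ht e he
    obtain ⟨h1, h2⟩ := Eplus_Bplus he
    rw [hg] at *
    obtain ⟨⟨i, j⟩, b⟩ := e
    refine ⟨⟨_, h1, ?_⟩, ⟨_, h2, ?_⟩⟩
    · cases b <;> simp [transG]
    · cases b <;> simp [transG] <;> ring_nf
  · rintro t ht _ ⟨u, hu, rfl⟩ _ ⟨v, hv, rfl⟩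
    rw [GAut.cn]
    have : (g t).σ ⁻¹' ((g t).σ.symm ⁻¹' Eplus n) = Eplus n := by ext e; simp
    rw [this]
    exact Bplus_conn (by exact_mod_cast hn) hu hv
  · rintro ⟨t1, t2⟩ ht ⟨s1, s2⟩ hs hne
    rw [Set.disjoint_left]
    rintro e h1 h2
    obtain ⟨a1, a2⟩ := Eplus_Bplus h1
    have key : ∀ a b : ℕ, a ≠ b → ∀ z : ℤ, -n ≤ z - (2 * n + 2) * a → z - (2 * n + 2) * a ≤ n + 1 →
        -n ≤ z - (2 * n + 2) * b → z - (2 * n + 2) * b ≤ n + 1 → False := by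
      intro a b hab z h1 h2 h3 h4
      rcases lt_or_gt_of_ne hab with hab | hab
      · have : (a : ℤ) + 1 ≤ b := by exact_mod_cast hab
        nlinarith
      · have : (b : ℤ) + 1 ≤ a := by exact_mod_cast hab
        nlinarith
    obtain ⟨⟨i, j⟩, b⟩ := e
    obtain ⟨c1, c2⟩ := Eplus_Bplus h2
    rw [hg] at a1 a2 c1 c2
    simp only [transG, Bplus, src, Set.mem_ofPred_eq, Equiv.coe_fn_symm_mk, Prod.fst_sub, Prod.snd_sub] at a1 c1
    by_cases e1 : t1 = s1
    · have e2 : t2 ≠ s2 := fun e2 => hne (by rw [e1, e2])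
      refine key t2 s2 e2 j ?_ ?_ ?_ ?_ <;> omega
    · refine key t1 s1 e1 i ?_ ?_ ?_ ?_ <;> omega
  · intro t ht i
    exact ⟨_, Outer_Bplus ((hx t ht).1 i), rfl⟩
  · intro t ht i j hij
    rw [GAut.cn, hpre]
    exact (hx t ht).2.2 i j hij
  · intro t ht i
    refine hit_Sph ?_ ?_
    · have hb := Outer_Bplus ((hx t ht).1 i)
      have ht' := hT ht
      simp only [Finset.mem_product, Finset.mem_range] at ht'
      have h1 : (t.1 : ℤ) + 1 ≤ K := by exact_mod_cast ht'.1
      have h2 : (t.2 : ℤ) + 1 ≤ K := by exact_mod_cast ht'.2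
      have h3 : (0 : ℤ) ≤ t.1 := by positivity
      have h4 : (0 : ℤ) ≤ t.2 := by positivity
      have hMz : (M : ℤ) = (2 * n + 2) * (K + 1) := by rw [hM]; push_cast; ring
      rw [hg]
      generalize x t i = y at hb
      obtain ⟨y1, y2⟩ := y
      simp only [Bplus, Set.mem_ofPred_eq] at hb
      simp only [transG, Dbox, Equiv.coe_addRight, Set.mem_ofPred_eq, Prod.mk_add_mk, hMz]
      have hn0 : (0 : ℤ) ≤ n := by positivity
      have b1 : -(n : ℤ) ≤ y1 ∧ y1 ≤ n + 1 := by omega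
      have b2 : -(n : ℤ) ≤ y2 ∧ y2 ≤ n + 1 := by omega
      refine ⟨?_, ?_, ?_, ?_⟩ <;> nlinarith
    · rw [GAut.inf, hpre]
      exact (hx t ht).2.1 i

/-- The Harris theorem: no infinite cluster when open edges are not more likely than closed ones. -/
theorem harris (μ : Measure Bool) [IsProbabilityMeasure μ] (hμ : μ {true} ≤ μ {false}) :
    ∀ᵐ a ∂(Pr μ), ∀ v, (Comp (op a) v).Finite := by
  classical
  rcases inf_zero_one μ with h | h
  · exact h
  exfalso
  obtain ⟨n, hn, hT⟩ := tri_pos μ hμ h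
  have ht : μ {true} ≠ 0 := by
    intro h0
    have hall : ∀ᵐ a ∂(Pr μ), ∀ e, a e ≠ true := by
      rw [ae_all_iff]
      intro e
      refine (measurePreserving_eval_infinitePi (fun _ : Ed => μ) e).quasiMeasurePreserving.ae
        (p := fun z => z ≠ true) ?_
      rw [ae_iff]
      simpa using h0
    obtain ⟨a, ⟨v, hv⟩, ha⟩ := (h.and hall).exists
    apply hv
    refine (Set.finite_singleton v).subset ?_
    intro w hw
    have hw : Cn (op a) v w := hw
    rcases Relation.ReflTransGen.cases_tail hw with h | ⟨b, _, e, he, _⟩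
    · exact h
    · exact absurd he (ha e)
  let F : Finset Ed := (Eplus_finite n).toFinset
  have hF : ∀ e, e ∈ F ↔ e ∈ Eplus n := fun e => by simp [F]
  let G : Set (Ed → Bool) := {a | Tri n (op a)} ∩ {a | ∀ e ∈ F, a e = true}
  have hGm : MeasurableSet G := by
    refine (measurable_tri n).inter ?_
    have : {a : Ed → Bool | ∀ e ∈ F, a e = true} = ⋂ e ∈ F, (fun a => a e) ⁻¹' {true} := by
      ext a; simp
    rw [this]
    exact Finset.measurableSet_biInter F fun e _ => measurable_pi_apply e (measurableSet_singleton _)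
  have hG0 : Pr μ G ≠ 0 := by
    refine open_fin μ ht (measurable_tri n) F ?_ hT
    intro a b hab hA
    have : op a \ Eplus n = op b \ Eplus n := by
      ext e
      simp only [Set.mem_diff, op, Set.mem_ofPred_eq]
      refine and_congr_left fun he => ?_
      rw [hab e (fun h => he ((hF e).1 h))]
    simp only [Tri, Set.mem_ofPred_eq] at hA ⊢
    rwa [← this]
  let g : ℕ × ℕ → GAut := fun t => transG ((2 * n + 2 : ℤ) * t.1, (2 * n + 2 : ℤ) * t.2)
  let Gt : ℕ × ℕ → Set (Ed → Bool) := fun t => (fun a e => a ((g t).σ e)) ⁻¹' G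
  have hmp : ∀ t, MeasurePreserving (fun (a : Ed → Bool) e => a ((g t).σ e)) (Pr μ) (Pr μ) :=
    fun t => perm_mp (fun _ : Ed => μ) (g t).σ.injective (fun _ => rfl)
  have hGtm : ∀ t, MeasurableSet (Gt t) := fun t => (hmp t).measurable hGm
  have hGt : ∀ t, Pr μ (Gt t) = Pr μ G := fun t =>
    (hmp t).measure_preimage hGm.nullMeasurableSet
  have hbound : ∀ K : ℕ, (K * K : ℕ) * Pr μ G ≤
      ((4 * (2 * ((2 * n + 2) * (K + 1)) + 1) : ℕ) : ℝ≥0∞) := by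
    intro K
    let R := Finset.range K ×ˢ Finset.range K
    have hR : R.card = K * K := by simp [R]
    calc (K * K : ℕ) * Pr μ G = ∑ t ∈ R, Pr μ (Gt t) := by
          simp only [hGt, Finset.sum_const, hR, nsmul_eq_mul]
      _ = ∑ t ∈ R, ∫⁻ a, (Gt t).indicator 1 a ∂(Pr μ) := by
          refine Finset.sum_congr rfl fun t _ => ?_
          rw [lintegral_indicator_one (hGtm t)]
      _ = ∫⁻ a, ∑ t ∈ R, (Gt t).indicator 1 a ∂(Pr μ) := by
          rw [lintegral_finsetSum]
          exact fun t _ => measurable_one.indicator (hGtm t)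
      _ ≤ ∫⁻ _, ((4 * (2 * ((2 * n + 2) * (K + 1)) + 1) : ℕ) : ℝ≥0∞) ∂(Pr μ) := by
          refine lintegral_mono fun a => ?_
          have e1 : ∑ t ∈ R, (Gt t).indicator (1 : (Ed → Bool) → ℝ≥0∞) a
              = ((R.filter fun t => a ∈ Gt t).card : ℝ≥0∞) := by
            simp only [Set.indicator_apply, Pi.one_apply, Finset.sum_boole]
          rw [e1]
          refine Nat.cast_le.2 ?_
          refine harris_card hn K (op a) _ (Finset.filter_subset _ _) g (fun _ => rfl) ?_
          intro t ht
          have := (Finset.mem_filter.1 ht).2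
          refine ⟨this.1, fun e he => this.2 e ((hF e).2 he)⟩
      _ = _ := by simp
  obtain ⟨K, hK⟩ := ENNReal.exists_nat_mul_gt hG0
    (ENNReal.natCast_ne_top (4 * (4 * (2 * n + 2) + 1)))
  rcases Nat.eq_zero_or_pos K with rfl | hKp
  · simp at hK
  have hb := hbound K
  have h2 : ((4 * (2 * ((2 * n + 2) * (K + 1)) + 1) : ℕ) : ℝ≥0∞) ≤
      (K : ℝ≥0∞) * ((4 * (4 * (2 * n + 2) + 1) : ℕ) : ℝ≥0∞) := by
    rw [← Nat.cast_mul]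
    refine Nat.cast_le.2 ?_
    nlinarith
  have h3 : (K : ℝ≥0∞) * (K * Pr μ G) ≤ K * ((4 * (4 * (2 * n + 2) + 1) : ℕ) : ℝ≥0∞) := by
    rw [← mul_assoc, ← Nat.cast_mul]
    exact hb.trans h2
  have h4 := (ENNReal.mul_le_mul_iff_right (by exact_mod_cast hKp.ne') (ENNReal.natCast_ne_top K)).1 h3
  exact absurd hK (not_lt.2 h4)

end DaC

namespace DaC

/-- Fair coin. -/
noncomputable def fair : Measure Bool :=
  (2⁻¹ : ℝ≥0∞) • Measure.dirac true + (2⁻¹ : ℝ≥0∞) • Measure.dirac false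

lemma fair_singleton (b : Bool) : fair {b} = 2⁻¹ := by
  cases b <;> simp [fair]

instance : IsProbabilityMeasure fair := by
  constructor
  simp [fair, ENNReal.inv_two_add_inv_two]

instance : IsProbabilityMeasure base := by
  constructor
  simp [base]

lemma boolOf_true {P : Prop} : boolOf P = true ↔ P := by simp [boolOf]

lemma boolOf_false {P : Prop} : boolOf P = false ↔ ¬ P := by simp [boolOf]

lemma boolOf_congr {P Q : Prop} (h : P ↔ Q) : boolOf P = boolOf Q := by rw [propext h]

lemma measurable_boolOf {α : Type*} [MeasurableSpace α] {P : α → Prop}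
    (h : MeasurableSet {x | P x}) : Measurable fun x => boolOf (P x) := by
  refine measurable_to_bool ?_
  convert h using 1
  ext x
  exact boolOf_true

/-- Doubling map. -/
noncomputable def dbl (x : ℝ) : ℝ := Int.fract (2 * x)

lemma measurable_dbl : Measurable dbl := measurable_fract.comp (measurable_const_mul 2)

lemma measurable_bit (n : ℕ) : Measurable (bit n) := by
  refine measurable_boolOf ?_
  have : Measurable fun x : ℝ => ⌊x * 2 ^ (n + 1)⌋ % 2 :=
    (measurable_of_countable (fun z : ℤ => z % 2)).comp
      (Int.measurable_floor.comp (measurable_mul_const _))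
  exact this (measurableSet_singleton 1)

lemma bit_succ (n : ℕ) (x : ℝ) : bit (n + 1) x = bit n (dbl x) := by
  have h : dbl x * 2 ^ (n + 1) = x * 2 ^ (n + 1 + 1) - ((⌊2 * x⌋ * 2 ^ (n + 1) : ℤ) : ℝ) := by
    rw [dbl, Int.fract]; push_cast; ring
  unfold bit
  rw [h, Int.floor_sub_intCast]
  apply boolOf_congr
  have : (⌊2 * x⌋ * 2 ^ (n + 1) : ℤ) % 2 = 0 := by
    rw [pow_succ, ← mul_assoc]; simp
  omega

lemma base_eq : base = volume.restrict (Set.Ioo (0 : ℝ) 1) := by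
  rw [base]
  exact Measure.restrict_congr_set Ioo_ae_eq_Ioc.symm

lemma half_vol {B : Set ℝ} (hB : MeasurableSet B) :
    volume ((fun x : ℝ => 2 * x) ⁻¹' B) = 2⁻¹ * volume B := by
  rw [Real.volume_preimage_mul_left (by norm_num)]
  congr 1
  rw [abs_of_pos (by norm_num), ENNReal.ofReal_inv_of_pos (by norm_num)]
  norm_num

lemma dbl_law {B : Set ℝ} (hB : MeasurableSet B) (b : Bool) :
    base (bit 0 ⁻¹' {b} ∩ dbl ⁻¹' B) = 2⁻¹ * base B := by
  rw [base_eq, Measure.restrict_apply ((measurable_bit 0 (measurableSet_singleton b)).inter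
    (measurable_dbl hB)), Measure.restrict_apply hB]
  have hBI : MeasurableSet (B ∩ Set.Ioo (0 : ℝ) 1) := hB.inter measurableSet_Ioo
  cases b
  · rw [← half_vol hBI]
    apply measure_congr
    have h0 : ∀ᵐ x : ℝ, x ≠ 2⁻¹ := by simp [ae_iff]
    filter_upwards [h0] with x hx
    apply propext
    show (bit 0 x = false ∧ dbl x ∈ B) ∧ (0 < x ∧ x < 1) ↔ 2 * x ∈ B ∧ (0 < 2 * x ∧ 2 * x < 1)
    by_cases h1 : 0 < x ∧ x < 1
    · rcases lt_or_gt_of_ne hx with h2 | h2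
      · have hf : ⌊2 * x⌋ = 0 := by
          rw [Int.floor_eq_iff]; norm_num at *; constructor <;> linarith
        have hb : bit 0 x = false := by
          unfold bit
          rw [boolOf_false]
          have : x * 2 ^ (0 + 1) = 2 * x := by ring
          rw [this, hf]; norm_num
        have hd : dbl x = 2 * x := by rw [dbl, Int.fract, hf]; simp
        rw [hd]
        have : 2 * x < 1 := by norm_num at *; linarith
        have : 0 < 2 * x := by linarith
        tauto
      · have hf : ⌊2 * x⌋ = 1 := by
          rw [Int.floor_eq_iff]; norm_num at *; constructor <;> linarith
        have hb : bit 0 x = true := by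
          unfold bit
          rw [boolOf_true]
          have : x * 2 ^ (0 + 1) = 2 * x := by ring
          rw [this, hf]; norm_num
        have : ¬ 2 * x < 1 := by norm_num at *; linarith
        simp [hb, this]
    · have : ¬ (0 < 2 * x ∧ 2 * x < 1) := by
        rintro ⟨h2, h3⟩; exact h1 ⟨by linarith, by linarith⟩
      simp only [h1, this, and_false]
  · have hs : volume ((fun x : ℝ => x + (-1)) ⁻¹' (B ∩ Set.Ioo (0 : ℝ) 1)) =
      volume (B ∩ Set.Ioo (0 : ℝ) 1) := measure_preimage_add_right _ _ _
    rw [← hs, ← half_vol (measurable_add_const _ hBI)]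
    apply measure_congr
    have h0 : ∀ᵐ x : ℝ, x ≠ 2⁻¹ := by simp [ae_iff]
    filter_upwards [h0] with x hx
    apply propext
    show (bit 0 x = true ∧ dbl x ∈ B) ∧ (0 < x ∧ x < 1) ↔
      2 * x + (-1) ∈ B ∧ (0 < 2 * x + (-1) ∧ 2 * x + (-1) < 1)
    by_cases h1 : 0 < x ∧ x < 1
    · rcases lt_or_gt_of_ne hx with h2 | h2
      · have hf : ⌊2 * x⌋ = 0 := by
          rw [Int.floor_eq_iff]; norm_num at *; constructor <;> linarith
        have hb : bit 0 x = false := by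
          unfold bit
          rw [boolOf_false]
          have : x * 2 ^ (0 + 1) = 2 * x := by ring
          rw [this, hf]; norm_num
        have : ¬ 0 < 2 * x + (-1) := by norm_num at *; linarith
        simp only [hb, this, false_and, and_false]
        simp
      · have hf : ⌊2 * x⌋ = 1 := by
          rw [Int.floor_eq_iff]; norm_num at *; constructor <;> linarith
        have hb : bit 0 x = true := by
          unfold bit
          rw [boolOf_true]
          have : x * 2 ^ (0 + 1) = 2 * x := by ring
          rw [this, hf]; norm_num
        have hd : dbl x = 2 * x + (-1) := by rw [dbl, Int.fract, hf]; push_cast; ring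
        rw [hd]
        have : 0 < 2 * x + (-1) := by norm_num at *; linarith
        have : 2 * x + (-1) < 1 := by linarith
        tauto
    · have : ¬ (0 < 2 * x + (-1) ∧ 2 * x + (-1) < 1) := by
        rintro ⟨h2, h3⟩; exact h1 ⟨by linarith, by linarith⟩
      simp only [h1, this, and_false]

lemma dbl_law_set {B : Set ℝ} (hB : MeasurableSet B) (t : Set Bool) :
    base (bit 0 ⁻¹' t ∩ dbl ⁻¹' B) = fair t * base B := by
  have : (base.restrict (dbl ⁻¹' B)).map (bit 0) = base B • fair := by
    apply bool_measure_ext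
    intro b
    rw [Measure.map_apply (measurable_bit 0) (measurableSet_singleton b),
      Measure.restrict_apply (measurable_bit 0 (measurableSet_singleton b)), dbl_law hB]
    simp [fair_singleton, mul_comm]
  have h := congrArg (fun m => m t) this
  simp only [Measure.smul_apply, smul_eq_mul] at h
  have ht : MeasurableSet t := t.toFinite.measurableSet
  rw [Measure.map_apply (measurable_bit 0) ht,
      Measure.restrict_apply (measurable_bit 0 ht)] at h
  rw [h, mul_comm]

lemma bits_fin (N : ℕ) : ∀ t : ℕ → Set Bool,
    base {x | ∀ i < N, bit i x ∈ t i} = ∏ i ∈ Finset.range N, fair (t i) := by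
  induction N with
  | zero => intro t; simp
  | succ N ih =>
    intro t
    have hm : MeasurableSet {x | ∀ i < N, bit i x ∈ t (i + 1)} := by
      have : {x | ∀ i < N, bit i x ∈ t (i + 1)} = ⋂ i ∈ Finset.range N, bit i ⁻¹' (t (i + 1)) := by
        ext x; simp
      rw [this]
      exact Finset.measurableSet_biInter _ fun i _ =>
        measurable_bit i (Set.toFinite _).measurableSet
    have : {x | ∀ i < N + 1, bit i x ∈ t i} =
        bit 0 ⁻¹' (t 0) ∩ dbl ⁻¹' {x | ∀ i < N, bit i x ∈ t (i + 1)} := by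
      ext x
      simp only [Set.mem_ofPred_eq, Set.mem_inter_iff, Set.mem_preimage, ← bit_succ]
      constructor
      · intro h
        exact ⟨h 0 (by omega), fun i hi => h (i + 1) (by omega)⟩
      · rintro ⟨h0, h⟩ i hi
        cases i with
        | zero => exact h0
        | succ i => exact h i (by omega)
    rw [this, dbl_law_set hm, ih, Finset.prod_range_succ']
    rw [mul_comm]

/-- All the bits. -/
noncomputable def bits (x : ℝ) : ℕ → Bool := fun n => bit n x

lemma measurable_bits : Measurable bits := measurable_pi_lambda _ measurable_bit

lemma bits_law : base.map bits = Measure.infinitePi fun _ : ℕ => fair := by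
  classical
  refine Measure.eq_infinitePi _ fun s t ht => ?_
  rw [Measure.map_apply measurable_bits (MeasurableSet.pi s.countable_toSet fun i _ => ht i)]
  obtain ⟨N, hN⟩ : ∃ N, s ⊆ Finset.range N := s.exists_nat_subset_range
  let t' : ℕ → Set Bool := fun i => if i ∈ s then t i else Set.univ
  have h := bits_fin N t'
  have e1 : {x | ∀ i < N, bit i x ∈ t' i} = bits ⁻¹' (Set.pi s t) := by
    ext x
    simp only [Set.mem_ofPred_eq, Set.mem_preimage, Set.mem_pi, Finset.mem_coe, t', bits]
    constructor
    · intro h i hi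
      have := h i (Finset.mem_range.1 (hN hi))
      rwa [if_pos hi] at this
    · intro h i _
      split_ifs with hi
      · exact h i hi
      · trivial
  rw [← e1, h]
  rw [← Finset.prod_subset hN]
  · exact Finset.prod_congr rfl fun i hi => by simp [t', hi]
  · intro i _ hi
    show fair (if i ∈ s then t i else Set.univ) = 1
    rw [if_neg hi, measure_univ]

end DaC

namespace DaC

/-- The real number with given binary digits. -/
noncomputable def ofBits (b : ℕ → Bool) : ℝ :=
  ∑' k : ℕ, if b k then ((2 : ℝ)⁻¹) ^ (k + 1) else 0

lemma summable_ofBits (b : ℕ → Bool) :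
    Summable fun k : ℕ => if b k then ((2 : ℝ)⁻¹) ^ (k + 1) else 0 := by
  have hs : Summable fun k : ℕ => ((2 : ℝ)⁻¹) ^ (k + 1) :=
    (summable_nat_add_iff 1).2 (summable_geometric_of_lt_one (by norm_num) (by norm_num))
  refine Summable.of_nonneg_of_le (fun k => ?_) (fun k => ?_) hs
  · split_ifs <;> positivity
  · split_ifs
    · exact le_rfl
    · positivity

lemma measurable_ofBits : Measurable ofBits := by
  refine measurable_of_tendsto_metrizable
    (f := fun N (b : ℕ → Bool) => ∑ k ∈ Finset.range N, if b k then ((2 : ℝ)⁻¹) ^ (k + 1) else 0)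
    ?_ ?_
  · intro N
    refine Finset.measurable_sum _ fun k _ => ?_
    have hk : MeasurableSet {b : ℕ → Bool | b k = true} :=
      (show Measurable fun b : ℕ → Bool => b k from measurable_pi_apply k)
        (measurableSet_singleton true)
    exact Measurable.ite hk measurable_const measurable_const
  · rw [tendsto_pi_nhds]
    exact fun b => (summable_ofBits b).hasSum.tendsto_sum_nat

lemma ofBits_ge {b : ℕ → Bool} (h : b 0 = true) : 1 / 2 ≤ ofBits b := by
  have := (summable_ofBits b).le_tsum 0 (fun k _ => by split_ifs <;> positivity)
  simp only [h, if_true] at this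
  unfold ofBits
  refine le_trans ?_ this
  norm_num

/-- Law of the coin with threshold `p`. -/
noncomputable def coin (p : ℝ) : Measure Bool :=
  (Measure.infinitePi fun _ : ℕ => fair).map fun b => boolOf (ofBits b < p)

lemma measurable_thr (p : ℝ) : Measurable fun b : ℕ → Bool => boolOf (ofBits b < p) :=
  measurable_boolOf (measurable_ofBits measurableSet_Iio)

instance (p : ℝ) : IsProbabilityMeasure (coin p) :=
  Measure.isProbabilityMeasure_map (measurable_thr p).aemeasurable

lemma coin_le {p : ℝ} (hp : p < 1 / 2) : coin p {true} ≤ coin p {false} := by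
  have h1 : coin p {true} ≤ 2⁻¹ := by
    rw [coin, Measure.map_apply (measurable_thr p) (measurableSet_singleton _)]
    calc _ ≤ (Measure.infinitePi fun _ : ℕ => fair) ((fun b : ℕ → Bool => b 0) ⁻¹' {false}) := by
          refine measure_mono fun b hb => ?_
          have hb : boolOf (ofBits b < p) = true := hb
          rw [boolOf_true] at hb
          show b 0 = false
          by_contra h
          have := ofBits_ge (b := b) (by simpa using h)
          linarith
      _ = 2⁻¹ := by
          rw [(measurePreserving_eval_infinitePi (fun _ : ℕ => fair) 0).measure_preimage
            (measurableSet_singleton _).nullMeasurableSet, fair_singleton]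
  have h2 := bool_sum (coin p)
  by_contra hcon
  push Not at hcon
  have : coin p {true} + coin p {false} < 2⁻¹ + 2⁻¹ :=
    ENNReal.add_lt_add_of_le_of_lt (measure_ne_top _ _) h1 (hcon.trans_le h1)
  rw [h2, ENNReal.inv_two_add_inv_two] at this
  exact lt_irrefl _ this

/-- The index of the uniform variable used for an edge or a vertex. -/
noncomputable def idx : Ed ⊕ V → ℕ
  | .inl e => 2 * eIdx (src e) (tgt e)
  | .inr v => 2 * Encodable.encode v + 1

lemma eIdx_comm (u v : V) : eIdx u v = eIdx v u := min_comm _ _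

lemma eIdx_eq {u v u' v' : V} (h : eIdx u v = eIdx u' v') :
    (u = u' ∧ v = v') ∨ (u = v' ∧ v = u') := by
  have h1 : eIdx u v = Encodable.encode (u, v) ∨ eIdx u v = Encodable.encode (v, u) :=
    min_choice _ _
  have h2 : eIdx u' v' = Encodable.encode (u', v') ∨ eIdx u' v' = Encodable.encode (v', u') :=
    min_choice _ _
  rcases h1 with h1 | h1 <;> rcases h2 with h2 | h2 <;> rw [h1, h2, Encodable.encode_inj] at h <;>
    simp only [Prod.mk.injEq] at h <;> tauto

lemma idx_inj : Function.Injective idx := by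
  rintro (e | v) (e' | v') h
  · congr 1
    have h : eIdx (src e) (tgt e) = eIdx (src e') (tgt e') := by
      simp only [idx] at h; omega
    have := eIdx_eq h
    obtain ⟨⟨i, j⟩, b⟩ := e
    obtain ⟨⟨i', j'⟩, b'⟩ := e'
    cases b <;> cases b' <;> simp at this ⊢ <;> omega
  · simp only [idx] at h; omega
  · simp only [idx] at h; omega
  · congr 1
    simp only [idx] at h
    exact Encodable.encode_injective (by omega)

/-- Thresholds. -/
def thr (p r : ℝ) : Ed ⊕ V → ℝ
  | .inl _ => p
  | .inr _ => r

/-- The field of coins. -/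
noncomputable def field (p r : ℝ) (x : ℝ) : Ed ⊕ V → Bool :=
  fun j => boolOf (unif (idx j) x < thr p r j)

lemma pair_inj : Function.Injective fun q : (Ed ⊕ V) × ℕ => Nat.pair (idx q.1) q.2 := by
  rintro ⟨j, k⟩ ⟨j', k'⟩ h
  have := Nat.pair_eq_pair.1 h
  rw [Prod.mk.injEq]
  exact ⟨idx_inj this.1, this.2⟩

lemma field_eq (p r x : ℝ) : field p r x = (fun (w : Ed ⊕ V → ℕ → Bool) j =>
    boolOf (ofBits (w j) < thr p r j))
    (MeasurableEquiv.curry (Ed ⊕ V) ℕ Bool ((fun (b : ℕ → Bool) (q : (Ed ⊕ V) × ℕ) =>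
      b (Nat.pair (idx q.1) q.2)) (bits x))) := rfl

lemma measurable_field (p r : ℝ) : Measurable (field p r) := by
  have h1 : Measurable (fun (b : ℕ → Bool) (q : (Ed ⊕ V) × ℕ) => b (Nat.pair (idx q.1) q.2)) :=
    measurable_pi_lambda _ fun q => measurable_pi_apply _
  have h2 : Measurable (fun (w : Ed ⊕ V → ℕ → Bool) j => boolOf (ofBits (w j) < thr p r j)) :=
    measurable_pi_lambda _ fun j => (measurable_thr _).comp (measurable_pi_apply j)
  exact h2.comp ((MeasurableEquiv.measurable (MeasurableEquiv.curry (Ed ⊕ V) ℕ Bool)).comp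
    (h1.comp measurable_bits))

lemma field_law (p r : ℝ) :
    base.map (field p r) = Measure.infinitePi fun j => coin (thr p r j) := by
  have h1 : Measurable (fun (b : ℕ → Bool) (q : (Ed ⊕ V) × ℕ) => b (Nat.pair (idx q.1) q.2)) :=
    measurable_pi_lambda _ fun q => measurable_pi_apply _
  have h2 : Measurable (fun (w : Ed ⊕ V → ℕ → Bool) j => boolOf (ofBits (w j) < thr p r j)) :=
    measurable_pi_lambda _ fun j => (measurable_thr _).comp (measurable_pi_apply j)
  have e1 : (Measure.infinitePi fun _ : ℕ => fair).map
      (fun (b : ℕ → Bool) (q : (Ed ⊕ V) × ℕ) => b (Nat.pair (idx q.1) q.2)) =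
      Measure.infinitePi fun _ : (Ed ⊕ V) × ℕ => fair :=
    Measure.map_infinitePi_infinitePi_of_inj (P := fun _ => fair) pair_inj
  have e2 := Measure.infinitePi_map_curry (fun (_ : Ed ⊕ V) (_ : ℕ) => fair)
  have e3 := Measure.infinitePi_map_pi (μ := fun _ : Ed ⊕ V => Measure.infinitePi fun _ : ℕ => fair)
    (f := fun j b => boolOf (ofBits b < thr p r j)) (fun j => measurable_thr _)
  have : field p r = (fun (w : Ed ⊕ V → ℕ → Bool) j => boolOf (ofBits (w j) < thr p r j)) ∘
      (MeasurableEquiv.curry (Ed ⊕ V) ℕ Bool) ∘ (fun (b : ℕ → Bool) (q : (Ed ⊕ V) × ℕ) =>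
      b (Nat.pair (idx q.1) q.2)) ∘ bits := rfl
  rw [this, ← Measure.map_map h2 ((MeasurableEquiv.measurable _).comp (h1.comp measurable_bits)),
    ← Measure.map_map (MeasurableEquiv.measurable _) (h1.comp measurable_bits),
    ← Measure.map_map h1 measurable_bits, bits_law, e1, e2, e3]
  rfl

/-- Edge configuration from an edge colouring. -/
noncomputable def cfg (a : Ed → Bool) : EdgeCfg := fun u v => boolOf (∃ e, Ends e u v ∧ a e = true)

lemma sq_unit {x y : ℤ} (h : x ^ 2 + y ^ 2 = 1) :
    (x = 1 ∧ y = 0) ∨ (x = -1 ∧ y = 0) ∨ (x = 0 ∧ y = 1) ∨ (x = 0 ∧ y = -1) := by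
  have hx1 : x ≤ 1 := by nlinarith [sq_nonneg y]
  have hx2 : -1 ≤ x := by nlinarith [sq_nonneg y]
  have hy1 : y ≤ 1 := by nlinarith [sq_nonneg x]
  have hy2 : -1 ≤ y := by nlinarith [sq_nonneg x]
  interval_cases x <;> interval_cases y <;> simp_all

lemma sqAdj_iff (u v : V) : SqAdj u v ↔ ∃ e, Ends e u v := by
  obtain ⟨i, j⟩ := u
  obtain ⟨k, l⟩ := v
  constructor
  · intro h
    rcases sq_unit h with h | h | h | h <;> simp only at h
    · exact ⟨((k, l), false), by simp [Ends]; omega⟩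
    · exact ⟨((i, j), false), by simp [Ends]; omega⟩
    · exact ⟨((k, l), true), by simp [Ends]; omega⟩
    · exact ⟨((i, j), true), by simp [Ends]; omega⟩
  · rintro ⟨⟨⟨x, y⟩, b⟩, h⟩
    unfold SqAdj
    cases b <;> simp [Ends] at h <;> rcases h with ⟨⟨rfl, rfl⟩, rfl, rfl⟩ | ⟨⟨rfl, rfl⟩, rfl, rfl⟩ <;>
      ring

lemma edgeU_ends {e : Ed} {u v : V} (h : Ends e u v) (x : ℝ) :
    edgeU u v x = unif (idx (.inl e)) x := by
  show unif (2 * eIdx u v) x = unif (2 * eIdx (src e) (tgt e)) x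
  rcases h with ⟨h1, h2⟩ | ⟨h1, h2⟩
  · rw [h1, h2]
  · rw [h1, h2, eIdx_comm]

lemma edgeCfg_eq (p r x : ℝ) : edgeCfg SqAdj p x = cfg (fun e => field p r x (.inl e)) := by
  funext u v
  rw [Bool.eq_iff_iff]
  simp only [edgeCfg, cfg, Bool.and_eq_true, boolOf_true, field, thr, sqAdj_iff]
  constructor
  · rintro ⟨⟨e, he⟩, h⟩
    exact ⟨e, he, by rwa [← edgeU_ends he]⟩
  · rintro ⟨e, he, h⟩
    exact ⟨⟨e, he⟩, by rwa [edgeU_ends he]⟩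

/-- The DaC map with the canonical representative. -/
noncomputable def dacMap (w : Ed ⊕ V → Bool) : Config :=
  (cfg fun e => w (.inl e), fun v => w (.inr (clusterRep (cfg fun e => w (.inl e)) v)))

lemma dac_eq (p r x : ℝ) : (edgeCfg SqAdj p x, colourCfg SqAdj p r x) = dacMap (field p r x) := by
  unfold dacMap
  rw [← edgeCfg_eq p r x]
  rfl

lemma conn_cfg (a : Ed → Bool) (u v : V) : Conn (cfg a) u v ↔ Cn (op a) u v := by
  have : (fun x y => cfg a x y = true) = Step (op a) := by
    funext x y
    apply propext
    unfold cfg Step op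
    rw [boolOf_true]
    simp only [Set.mem_ofPred_eq]
    exact exists_congr fun e => and_comm
  unfold Conn Cn
  rw [this]

end DaC

namespace DaC

section rep
variable {α : Type*} [LinearOrder α]

/-- `w` is the minimal vertex of the cluster of `v` for the order given by `f`. -/
def IsRep (f : V → α) (a : Ed → Bool) (v w : V) : Prop :=
  Cn (op a) v w ∧ ∀ w', Cn (op a) v w' → f w ≤ f w'

lemma IsRep.unique {f : V → α} (hf : Function.Injective f) {a : Ed → Bool} {v w w' : V}
    (h : IsRep f a v w) (h' : IsRep f a v w') : w = w' :=
  hf (le_antisymm (h.2 _ h'.1) (h'.2 _ h.1))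

lemma IsRep.of_cn {f : V → α} {a : Ed → Bool} {u v w : V} (huv : Cn (op a) u v)
    (h : IsRep f a v w) : IsRep f a u w :=
  ⟨huv.trans h.1, fun w' hw' => h.2 w' (huv.symm.trans hw')⟩

open Classical in
/-- The minimal vertex (or `v` itself, if there is none). -/
noncomputable def rep (f : V → α) (a : Ed → Bool) (v : V) : V :=
  if h : ∃ w, IsRep f a v w then h.choose else v

lemma rep_spec {f : V → α} {a : Ed → Bool} {v : V} (h : ∃ w, IsRep f a v w) :
    IsRep f a v (rep f a v) := by
  unfold rep
  rw [dif_pos h]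
  exact h.choose_spec

lemma rep_eq {f : V → α} (hf : Function.Injective f) {a : Ed → Bool} {v w : V}
    (h : IsRep f a v w) : rep f a v = w := (rep_spec ⟨w, h⟩).unique hf h

lemma rep_none {f : V → α} {a : Ed → Bool} {v : V} (h : ¬ ∃ w, IsRep f a v w) :
    rep f a v = v := by
  unfold rep
  rw [dif_neg h]

lemma exists_rep (f : V → α) {a : Ed → Bool} {v : V} (h : (Comp (op a) v).Finite) :
    ∃ w, IsRep f a v w := by
  obtain ⟨w, hw, h⟩ := Set.exists_min_image _ f h ⟨v, Cn.refl _ _⟩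
  exact ⟨w, hw, h⟩

lemma measurable_isRep (f : V → α) (v w : V) : Measurable fun a => IsRep f a v w := by
  unfold IsRep
  exact (measurable_cn0 v w).and
    (Measurable.forall fun w' => (measurable_cn0 v w').imp measurable_const)

lemma measurable_rep {f : V → α} (hf : Function.Injective f) (v : V) :
    Measurable fun a => rep f a v := by
  refine measurable_to_countable' fun w => ?_
  have : (fun a => rep f a v) ⁻¹' {w} =
      {a | IsRep f a v w ∨ ((¬ ∃ w, IsRep f a v w) ∧ v = w)} := by
    ext a
    show rep f a v = w ↔ (IsRep f a v w ∨ ((¬ ∃ w, IsRep f a v w) ∧ v = w))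
    by_cases h : ∃ w, IsRep f a v w
    · constructor
      · rintro rfl
        exact Or.inl (rep_spec h)
      · rintro (h' | h')
        · exact rep_eq hf h'
        · exact absurd h h'.1
    · rw [rep_none h]
      constructor
      · exact fun h' => Or.inr ⟨h, h'⟩
      · rintro (h' | h')
        · exact absurd ⟨w, h'⟩ h
        · exact h'.2
  rw [this]
  refine measurableSet_setOf.2 ?_
  exact (measurable_isRep f v w).or
    ((Measurable.exists fun w => measurable_isRep f v w).not.and measurable_const)

lemma rep_idem {f : V → α} (hf : Function.Injective f) {g : V → α} {a : Ed → Bool}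
    (h : ∀ v, (Comp (op a) v).Finite) {u v : V} (huv : Cn (op a) u v) :
    rep f a u = rep f a v := by
  refine rep_eq hf ?_
  exact (rep_spec (exists_rep f (h v))).of_cn huv

end rep

lemma clusterRep_eq (a : Ed → Bool) (v : V) :
    clusterRep (cfg a) v = rep (Encodable.encode : V → ℕ) a v := by
  have hne : (Encodable.encode '' pCluster (cfg a) v).Nonempty :=
    ⟨_, v, (conn_cfg a v v).2 (Cn.refl _ _), rfl⟩
  obtain ⟨w, hw, hs⟩ := Nat.sInf_mem hne
  unfold clusterRep
  rw [← hs, Encodable.encodek, Option.getD_some]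
  symm
  refine rep_eq Encodable.encode_injective ⟨(conn_cfg a v w).1 hw, fun w' hw' => ?_⟩
  rw [hs]
  exact Nat.sInf_le ⟨w', (conn_cfg a v w').2 hw', rfl⟩

/-- The DaC map with the representative for `f`. -/
noncomputable def repMap {α : Type*} [LinearOrder α] (f : V → α) (z : (Ed → Bool) × (V → Bool)) :
    Config := (cfg z.1, fun v => z.2 (rep f z.1 v))

lemma measurable_cfg : Measurable cfg := by
  refine measurable_pi_lambda _ fun u => measurable_pi_lambda _ fun v => ?_
  refine measurable_boolOf (measurableSet_setOf.2 ?_)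
  refine Measurable.exists fun e => measurable_const.and ?_
  exact measurableSet_setOf.1 ((show Measurable fun a : Ed → Bool => a e from measurable_pi_apply e)
    (measurableSet_singleton true))

lemma measurable_repMap {α : Type*} [LinearOrder α] {f : V → α} (hf : Function.Injective f) :
    Measurable (repMap f) := by
  refine (measurable_cfg.comp measurable_fst).prodMk (measurable_pi_lambda _ fun v => ?_)
  have h1 : Measurable fun z : V × (V → Bool) => z.2 z.1 :=
    measurable_from_prod_countable_right fun u => measurable_pi_apply u
  exact h1.comp (((measurable_rep hf v).comp measurable_fst).prodMk measurable_snd)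

lemma swap_law (s : Measure Bool) [IsProbabilityMeasure s] {C : V → V → Prop} {ρ₁ ρ₂ : V → V}
    (h1 : ∀ v, C v (ρ₁ v)) (h2 : ∀ v, C v (ρ₂ v))
    (c1 : ∀ u v, C u v → ρ₁ u = ρ₁ v) (c2 : ∀ u v, C u v → ρ₂ u = ρ₂ v)
    {B : Set (V → Bool)} (hB : MeasurableSet B) :
    (Measure.infinitePi fun _ : V => s) {c | (fun v => c (ρ₁ v)) ∈ B} =
    (Measure.infinitePi fun _ : V => s) {c | (fun v => c (ρ₂ v)) ∈ B} := by
  classical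
  have i11 : ∀ v, ρ₁ (ρ₁ v) = ρ₁ v := fun v => (c1 _ _ (h1 v)).symm
  have i12 : ∀ v, ρ₁ (ρ₂ v) = ρ₁ v := fun v => (c1 _ _ (h2 v)).symm
  have i21 : ∀ v, ρ₂ (ρ₁ v) = ρ₂ v := fun v => (c2 _ _ (h1 v)).symm
  have i22 : ∀ v, ρ₂ (ρ₂ v) = ρ₂ v := fun v => (c2 _ _ (h2 v)).symm
  let π : V → V := fun v => if ρ₂ v = v then ρ₁ v else if ρ₁ v = v then ρ₂ v else v
  have hπ : Function.Involutive π := by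
    intro v
    by_cases a : ρ₂ v = v
    · have e : π v = ρ₁ v := if_pos a
      rw [e]
      by_cases b : ρ₁ v = v
      · rw [b, e, b]
      · have : ¬ ρ₂ (ρ₁ v) = ρ₁ v := by rw [i21, a]; exact fun h => b h.symm
        simp only [π, if_neg this, i11, if_true, i21, a]
    · by_cases b : ρ₁ v = v
      · have e : π v = ρ₂ v := by simp only [π, if_neg a, if_pos b]
        rw [e]
        simp only [π, i22, if_true, i12, b]
      · have e : π v = v := by simp only [π, if_neg a, if_neg b]
        rw [e, e]
  have hmp := perm_mp (fun _ : V => s) hπ.injective (fun _ => rfl)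
  have hm : MeasurableSet {c : V → Bool | (fun v => c (ρ₂ v)) ∈ B} :=
    (measurable_pi_lambda (fun (c : V → Bool) v => c (ρ₂ v)) fun v => measurable_pi_apply _) hB
  rw [← hmp.measure_preimage hm.nullMeasurableSet]
  congr 1
  ext c
  show (fun v => c (ρ₁ v)) ∈ B ↔ (fun v => c (π (ρ₂ v))) ∈ B
  have : ∀ v, π (ρ₂ v) = ρ₁ v := fun v => by simp only [π, i22, if_true, i12]
  simp only [this]

lemma repMap_law {α β : Type*} [LinearOrder α] [LinearOrder β] {f : V → α} {g : V → β}
    (hf : Function.Injective f) (hg : Function.Injective g) (μ s : Measure Bool)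
    [IsProbabilityMeasure μ] [IsProbabilityMeasure s] (hμ : μ {true} ≤ μ {false}) :
    ((Pr μ).prod (Measure.infinitePi fun _ : V => s)).map (repMap f) =
    ((Pr μ).prod (Measure.infinitePi fun _ : V => s)).map (repMap g) := by
  have : IsProbabilityMeasure (Pr μ) := by unfold Pr; infer_instance
  ext B hB
  rw [Measure.map_apply (measurable_repMap hf) hB, Measure.map_apply (measurable_repMap hg) hB,
    Measure.prod_apply (measurable_repMap hf hB), Measure.prod_apply (measurable_repMap hg hB)]
  refine lintegral_congr_ae ?_
  filter_upwards [harris μ hμ] with a ha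
  have hBa : MeasurableSet {ξ : V → Bool | (cfg a, ξ) ∈ B} := measurable_prodMk_left hB
  exact swap_law s (C := Cn (op a)) (ρ₁ := rep f a) (ρ₂ := rep g a)
    (fun v => (rep_spec (exists_rep f (ha v))).1) (fun v => (rep_spec (exists_rep g (ha v))).1)
    (fun u v h => rep_eq hf ((rep_spec (exists_rep f (ha v))).of_cn h))
    (fun u v h => rep_eq hg ((rep_spec (exists_rep g (ha v))).of_cn h)) hBa

/-- Splitting a configuration. -/
def split (w : Ed ⊕ V → Bool) : (Ed → Bool) × (V → Bool) := (fun e => w (.inl e), fun v => w (.inr v))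

lemma measurable_split : Measurable split :=
  (measurable_pi_lambda _ fun e => measurable_pi_apply _).prodMk
    (measurable_pi_lambda _ fun e => measurable_pi_apply _)

lemma split_law (m : Ed ⊕ V → Measure Bool) [∀ j, IsProbabilityMeasure (m j)] :
    (Measure.infinitePi m).map split = (Measure.infinitePi fun e => m (.inl e)).prod
      (Measure.infinitePi fun v => m (.inr v)) := by
  classical
  let jn : (Ed → Bool) × (V → Bool) → (Ed ⊕ V → Bool) := fun z => Sum.elim z.1 z.2
  have hj : Measurable jn := by
    refine measurable_pi_lambda _ ?_
    rintro (e | v)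
    · exact (measurable_pi_apply e).comp measurable_fst
    · exact (measurable_pi_apply v).comp measurable_snd
  have key : ((Measure.infinitePi fun e => m (.inl e)).prod
      (Measure.infinitePi fun v => m (.inr v))).map jn = Measure.infinitePi m := by
    refine Measure.eq_infinitePi _ fun S t ht => ?_
    rw [Measure.map_apply hj (MeasurableSet.pi S.countable_toSet fun i _ => ht i)]
    have : jn ⁻¹' (Set.pi S t) = (Set.pi S.toLeft fun e => t (.inl e)) ×ˢ
        (Set.pi S.toRight fun v => t (.inr v)) := by
      ext z
      simp only [jn, Set.mem_preimage, Set.mem_pi, Finset.mem_coe, Set.mem_prod,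
        Finset.mem_toLeft, Finset.mem_toRight]
      constructor
      · intro h
        exact ⟨fun e he => h _ he, fun v hv => h _ hv⟩
      · rintro ⟨h1, h2⟩ (e | v) hi
        · exact h1 e hi
        · exact h2 v hi
    rw [this, Measure.prod_prod, Measure.infinitePi_pi _ (fun _ _ => ht _),
      Measure.infinitePi_pi _ (fun _ _ => ht _)]
    conv_rhs => rw [← Finset.toLeft_disjSum_toRight (u := S), Finset.prod_disjSum]
  rw [← key, Measure.map_map measurable_split hj]
  exact Measure.map_id

lemma dac_law {α : Type*} [LinearOrder α] {f : V → α} (hf : Function.Injective f) {p r : ℝ}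
    (hp : p < 1 / 2) :
    DaCMeasure SqAdj p r =
      (Measure.infinitePi fun j => coin (thr p r j)).map (repMap f ∘ split) := by
  have hd : (fun x => (edgeCfg SqAdj p x, colourCfg SqAdj p r x)) =
      (repMap (Encodable.encode : V → ℕ) ∘ split) ∘ field p r := by
    funext x
    rw [dac_eq]
    unfold dacMap
    simp only [clusterRep_eq]
    rfl
  unfold DaCMeasure
  rw [hd, ← Measure.map_map ((measurable_repMap Encodable.encode_injective).comp measurable_split)
    (measurable_field p r), field_law,
    ← Measure.map_map (measurable_repMap Encodable.encode_injective) measurable_split,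
    ← Measure.map_map (measurable_repMap hf) measurable_split, split_law]
  exact repMap_law Encodable.encode_injective hf (coin p) (coin r) (coin_le hp)

/-- Shift of the index set. -/
def tau (u : V) : Ed ⊕ V → Ed ⊕ V := Sum.map (transG u).σ (transG u).φ

lemma isRep_shift (u : V) (a : Ed → Bool) (v w : V) :
    IsRep (toLex : V → ℤ ×ₗ ℤ) a (v + u) (w + u) ↔
      IsRep (toLex : V → ℤ ×ₗ ℤ) (fun e => a ((transG u).σ e)) v w := by
  have hcn : ∀ x y : V, Cn (op a) (x + u) (y + u) ↔ Cn (op fun e => a ((transG u).σ e)) x y :=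
    fun x y => (transG u).cn (O := op a) (u := x) (v := y)
  have hle : ∀ x y : V, (toLex (x + u) : ℤ ×ₗ ℤ) ≤ toLex (y + u) ↔
      (toLex x : ℤ ×ₗ ℤ) ≤ toLex y := by
    rintro ⟨x1, x2⟩ ⟨y1, y2⟩
    obtain ⟨u1, u2⟩ := u
    simp only [Prod.Lex.toLex_le_toLex, Prod.mk_add_mk]
    omega
  unfold IsRep
  rw [hcn]
  refine and_congr_right fun _ => ?_
  constructor
  · intro h w' hw'
    rw [← hle]
    exact h _ ((hcn _ _).2 hw')
  · intro h w' hw'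
    have e : w' = (w' - u) + u := by abel
    rw [e] at hw' ⊢
    rw [hle]
    exact h _ ((hcn _ _).1 hw')

lemma rep_shift (u : V) (a : Ed → Bool) (v : V) :
    rep (toLex : V → ℤ ×ₗ ℤ) a (v + u) =
      rep (toLex : V → ℤ ×ₗ ℤ) (fun e => a ((transG u).σ e)) v + u := by
  by_cases h : ∃ w, IsRep (toLex : V → ℤ ×ₗ ℤ) (fun e => a ((transG u).σ e)) v w
  · exact rep_eq toLex.injective ((isRep_shift u a v _).2 (rep_spec h))
  · rw [rep_none h, rep_none]
    rintro ⟨w, hw⟩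
    apply h
    refine ⟨w - u, (isRep_shift u a v _).1 ?_⟩
    rwa [sub_add_cancel]

lemma shift_repMap (u : V) (w : Ed ⊕ V → Bool) :
    shift u ((repMap (toLex : V → ℤ ×ₗ ℤ) ∘ split) w) =
      (repMap (toLex : V → ℤ ×ₗ ℤ) ∘ split) (fun j => w (tau u j)) := by
  refine Prod.ext ?_ ?_
  · funext x y
    refine boolOf_congr ?_
    constructor
    · rintro ⟨e, he, hw⟩
      refine ⟨(transG u).σ.symm e, ?_, ?_⟩
      · rw [← (transG u).h, Equiv.apply_symm_apply]
        exact he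
      · show w (.inl ((transG u).σ ((transG u).σ.symm e))) = true
        rw [Equiv.apply_symm_apply]
        exact hw
    · rintro ⟨e, he, hw⟩
      exact ⟨(transG u).σ e, ((transG u).h e x y).2 he, hw⟩
  · funext v
    show w (.inr (rep _ (fun e => w (.inl e)) (v + u))) = _
    rw [rep_shift]
    rfl

lemma measurable_shift (u : V) : Measurable (shift u) := by
  refine Measurable.prodMk ?_ ?_
  · refine measurable_pi_lambda _ fun x => measurable_pi_lambda _ fun y => ?_
    exact (measurable_pi_apply (y + u)).comp ((measurable_pi_apply (x + u)).comp measurable_fst)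
  · exact measurable_pi_lambda _ fun x => (measurable_pi_apply (x + u)).comp measurable_snd

lemma tau_inj (u : V) : Function.Injective (tau u) :=
  (transG u).σ.injective.sumMap (transG u).φ.injective

lemma ergodic_aux {p r : ℝ} (hp : p < 1 / 2) (u : V) (ht : Ed ⊕ V → ℤ)
    (hht : ∀ j, ht (tau u j) = ht j + 1) :
    MeasureTheory.MeasurePreserving (shift u) (DaCMeasure SqAdj p r) (DaCMeasure SqAdj p r) ∧
      ∀ A : Set Config, MeasurableSet A → shift u ⁻¹' A = A →
        DaCMeasure SqAdj p r A = 0 ∨ DaCMeasure SqAdj p r A = 1 := by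
  have hthr : ∀ j, coin (thr p r (tau u j)) = coin (thr p r j) := by
    rintro (e | v) <;> rfl
  have hmp := perm_mp (fun j => coin (thr p r j)) (tau_inj u) hthr
  have hΨ : Measurable (repMap (toLex : V → ℤ ×ₗ ℤ) ∘ split) :=
    (measurable_repMap toLex.injective).comp measurable_split
  have hcomm : shift u ∘ (repMap (toLex : V → ℤ ×ₗ ℤ) ∘ split) =
      (repMap (toLex : V → ℤ ×ₗ ℤ) ∘ split) ∘ fun w j => w (tau u j) :=
    funext fun w => shift_repMap u w
  rw [dac_law (f := (toLex : V → ℤ ×ₗ ℤ)) toLex.injective hp]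
  refine ⟨⟨measurable_shift u, ?_⟩, fun A hA hinv => ?_⟩
  · rw [Measure.map_map (measurable_shift u) hΨ, hcomm, ← Measure.map_map hΨ hmp.measurable,
      hmp.map_eq]
  · rw [Measure.map_apply hΨ hA]
    refine zero_one (fun j => coin (thr p r j)) (tau_inj u) hthr (mix_of_height ht hht) (hΨ hA) ?_
    apply Filter.EventuallyEq.of_eq
    rw [← Set.preimage_comp, ← hcomm, Set.preimage_comp, hinv]

end DaC

namespace DaC

/-- **Ergodicity.** For `p < 1/2`, the DaC measure is invariant under the
translations by `(1,0)` and `(0,1)`, and each of these translations is an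
ergodic measure-preserving transformation: every measurable invariant event
has probability `0` or `1`. -/
theorem ergodic_translations (p r : ℝ) (hp0 : 0 ≤ p) (hp : p < 1 / 2)
    (hr0 : 0 ≤ r) (hr1 : r ≤ 1) :
    (MeasureTheory.MeasurePreserving (shift ((1 : ℤ), (0 : ℤ)))
        (DaCMeasure SqAdj p r) (DaCMeasure SqAdj p r) ∧
      ∀ A : Set Config, MeasurableSet A → shift ((1 : ℤ), (0 : ℤ)) ⁻¹' A = A →
        DaCMeasure SqAdj p r A = 0 ∨ DaCMeasure SqAdj p r A = 1) ∧
    (MeasureTheory.MeasurePreserving (shift ((0 : ℤ), (1 : ℤ)))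
        (DaCMeasure SqAdj p r) (DaCMeasure SqAdj p r) ∧
      ∀ A : Set Config, MeasurableSet A → shift ((0 : ℤ), (1 : ℤ)) ⁻¹' A = A →
        DaCMeasure SqAdj p r A = 0 ∨ DaCMeasure SqAdj p r A = 1) := by
  refine ⟨ergodic_aux hp (1, 0) (Sum.elim (fun e => e.1.1) fun v => v.1) ?_,
    ergodic_aux hp (0, 1) (Sum.elim (fun e => e.1.2) fun v => v.2) ?_⟩
  · rintro (e | v) <;> simp [tau, transG]
  · rintro (e | v) <;> simp [tau, transG]

end DaC
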